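/- arXiv:2103.14281 — 9 statements merged into one kernel-verified Lean document; each statement's English description precedes it below -/
import Mathlib

section
/- Let X be a complex normed space that is uniformly c-convex with modulus Ω, let n ≥ 1, let c > 0 and α ∈ [0,1] be constants, and let f : 𝔹ⁿ → X be a holomorphic function satisfying |‖f(z)‖ − ‖f(w)‖| ≤ c·‖z − w‖^α for all z, w ∈ 𝔹ⁿ. Then for every z ∈ 𝔹ⁿ one has ‖f'(z)‖ ≤ 2K·Ω(c·K⁻¹·(1 − ‖z‖)^α)/(1 − ‖z‖), where K = ‖f(0)‖ + c. -/
open Metric Set Filter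

/-!
Fix `z` in the ball, put `r = 1 - ‖z‖`, and let `v` be a unit vector. Restricting `f` to the disc
`ζ ↦ z + ζ r v` and composing with a norming functional reduces the estimate to a scalar one: a
holomorphic `h` on the unit disc with `Re h ≤ M` satisfies `|h' 0| ≤ 2 (M - Re h 0)`, which is the
infinitesimal form of the Borel–Carathéodory inequality (`norm_deriv_le_of_re_le`). Consequently
`‖f z + lam • (r / 2) • f' z v‖ ≤ sup ‖f‖ ≤ ‖f z‖ + c r ^ α` for every `|lam| ≤ 1`, the supremum
being over the disc (`norm_add_smul_deriv_le`).

Dividing by `K = ‖f 0‖ + c ≥ ‖f z‖` gives vectors `x`, `y` with `‖x‖ ≤ 1` and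
`‖x + lam • y‖ ≤ ‖x‖ + δ`, where `δ = c K⁻¹ r ^ α`. Moving `x` radially to the unit sphere costs
exactly `1 - ‖x‖`, so uniform c-convexity still yields `‖y‖ ≤ Ω δ`
(`norm_le_modulus_of_norm_le_one`), which is the claim.
-/

/-- The derivative form of the Borel–Carathéodory inequality. -/
lemma norm_deriv_le_of_re_le {h : ℂ → ℂ} {M : ℝ} (hd : DifferentiableOn ℂ h (ball 0 1))
    (hM : ∀ ζ ∈ ball (0 : ℂ) 1, (h ζ).re ≤ M) : ‖deriv h 0‖ ≤ 2 * (M - (h 0).re) := by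
  have h0 : (h 0).re ≤ M := hM 0 (by simp)
  refine le_of_forall_pos_le_add fun ε hε => ?_
  -- Borel–Carathéodory needs a positive bound, so the gap `M - Re h 0` is enlarged slightly.
  set B := M - (h 0).re + ε / 4 with hB
  have hBpos : 0 < B := by linarith
  refine norm_deriv_le_of_lip' (by linarith) ?_
  have hlim : Tendsto (fun ζ : ℂ => 2 * B / (1 - ‖ζ‖)) (nhds 0) (nhds (2 * B / (1 - ‖(0 : ℂ)‖))) := by
    apply ContinuousAt.tendsto
    apply ContinuousAt.div <;> first | fun_prop | simp
  have hev := hlim.eventually_le_const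
    (show 2 * B / (1 - ‖(0 : ℂ)‖) < 2 * (M - (h 0).re) + ε by simp; linarith)
  filter_upwards [hev, ball_mem_nhds (0 : ℂ) one_pos] with ζ hζ hζ1
  have hbc := Complex.borelCaratheodory_zero (f := fun w => h w - h 0) (R := 1) (z := ζ) hBpos
    (hd.sub_const _) (fun w hw => by
      have := hM w hw
      simp only [Set.mem_ofPred_eq, Complex.sub_re]
      linarith) one_pos hζ1 (by simp)
  calc ‖h ζ - h 0‖ ≤ 2 * B * ‖ζ‖ / (1 - ‖ζ‖) := hbc
    _ = 2 * B / (1 - ‖ζ‖) * ‖ζ‖ := by ring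
    _ ≤ (2 * (M - (h 0).re) + ε) * ‖ζ‖ := by gcongr
    _ = _ := by simp

/-- A holomorphic function on the disc bounded by `M` satisfies `‖g 0 + lam g' 0 / 2‖ ≤ M`; no
completeness of the target is needed, since the claim is tested against functionals. -/
lemma norm_add_smul_deriv_le {X : Type*} [NormedAddCommGroup X] [NormedSpace ℂ X]
    {g : ℂ → X} {M : ℝ} (hd : DifferentiableOn ℂ g (ball 0 1))
    (hM : ∀ ζ ∈ ball (0 : ℂ) 1, ‖g ζ‖ ≤ M) {lam : ℂ} (hlam : ‖lam‖ ≤ 1) :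
    ‖g 0 + lam • ((1 / 2 : ℂ) • deriv g 0)‖ ≤ M := by
  obtain ⟨φ, hφ1, hφ⟩ := exists_dual_vector'' ℂ (g 0 + lam • ((1 / 2 : ℂ) • deriv g 0))
  have hg : HasDerivAt (fun ζ => φ (g ζ)) (φ (deriv g 0)) 0 :=
    φ.hasFDerivAt.comp_hasDerivAt 0
      (hd.differentiableAt (ball_mem_nhds _ one_pos)).hasDerivAt
  have key := norm_deriv_le_of_re_le (h := fun ζ => φ (g ζ)) (M := M)
    (φ.differentiable.comp_differentiableOn hd) (fun ζ hζ =>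
      calc (φ (g ζ)).re ≤ ‖φ (g ζ)‖ := Complex.re_le_norm _
        _ ≤ ‖g ζ‖ := φ.le_of_opNorm_le_of_le hφ1 le_rfl |>.trans_eq (one_mul _)
        _ ≤ M := hM ζ hζ)
  rw [hg.deriv] at key
  have hre := congrArg Complex.re hφ
  rw [map_add, map_smul, map_smul, Complex.add_re] at hre
  have h2 : (lam • ((1 / 2 : ℂ) • φ (deriv g 0))).re ≤ ‖φ (deriv g 0)‖ / 2 := by
    refine (Complex.re_le_norm _).trans ?_
    rw [norm_smul, norm_smul]
    have : ‖(1 / 2 : ℂ)‖ = 1 / 2 := by norm_num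
    rw [this]
    nlinarith [norm_nonneg (φ (deriv g 0))]
  have h3 : ((‖g 0 + lam • ((1 / 2 : ℂ) • deriv g 0)‖ : ℝ) : ℂ).re
      = ‖g 0 + lam • ((1 / 2 : ℂ) • deriv g 0)‖ := Complex.ofReal_re _
  change _ = ((‖g 0 + lam • ((1 / 2 : ℂ) • deriv g 0)‖ : ℝ) : ℂ).re at hre
  linarith

/-- Uniform c-convexity, extended from the unit sphere to the closed unit ball. -/
lemma norm_le_modulus_of_norm_le_one {X : Type*} [NormedAddCommGroup X] [NormedSpace ℂ X]
    {Ω : ℝ → ℝ} (hΩpos : ∀ δ : ℝ, 0 < δ → 0 < Ω δ)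
    (hucc : ∀ x y : X, ‖x‖ = 1 → ∀ δ : ℝ, 0 < δ →
      (∀ lam : ℂ, ‖lam‖ ≤ 1 → ‖x + lam • y‖ ≤ 1 + δ) → ‖y‖ ≤ Ω δ)
    {x y : X} (hx : ‖x‖ ≤ 1) {δ : ℝ} (hδ : 0 < δ)
    (h : ∀ lam : ℂ, ‖lam‖ ≤ 1 → ‖x + lam • y‖ ≤ ‖x‖ + δ) : ‖y‖ ≤ Ω δ := by
  by_cases hy : y = 0
  · simpa [hy] using (hΩpos δ hδ).le
  obtain ⟨u, hu, hxu⟩ : ∃ u : X, ‖u‖ = 1 ∧ x = (‖x‖ : ℂ) • u := by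
    by_cases hx0 : x = 0
    · -- Any unit vector serves here; `y ≠ 0` guarantees that one exists.
      exact ⟨((‖y‖ : ℂ))⁻¹ • y, by simp [norm_smul, hy], by simp [hx0]⟩
    · have : (‖x‖ : ℂ) ≠ 0 := by simpa using hx0
      exact ⟨((‖x‖ : ℂ))⁻¹ • x, by simp [norm_smul, hx0], by rw [smul_inv_smul₀ this]⟩
  refine hucc u y hu δ hδ fun lam hlam => ?_
  have hsplit : u + lam • y = (x + lam • y) + ((1 - ‖x‖ : ℝ) : ℂ) • u := by
    have hs : x + ((1 - ‖x‖ : ℝ) : ℂ) • u = u := by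
      nth_rewrite 1 [hxu]
      push_cast
      module
    rw [add_right_comm, hs]
  have hnorm : ‖((1 - ‖x‖ : ℝ) : ℂ) • u‖ = 1 - ‖x‖ := by
    rw [norm_smul, hu, Complex.norm_real, Real.norm_of_nonneg (by linarith), mul_one]
  calc ‖u + lam • y‖ ≤ ‖x + lam • y‖ + ‖((1 - ‖x‖ : ℝ) : ℂ) • u‖ := hsplit ▸ norm_add_le _ _
    _ ≤ 1 + δ := by linarith [h lam hlam]

theorem lipschitz_modulus_fderiv_bound
    {X : Type*} [NormedAddCommGroup X] [NormedSpace ℂ X]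
    (Ω : ℝ → ℝ) (hΩpos : ∀ δ : ℝ, 0 < δ → 0 < Ω δ)
    (hΩmono : MonotoneOn Ω (Set.Ioi 0))
    (hΩ0 : Filter.Tendsto Ω (nhdsWithin 0 (Set.Ioi 0)) (nhds 0))
    (hucc : ∀ x y : X, ‖x‖ = 1 → ∀ δ : ℝ, 0 < δ →
      (∀ lam : ℂ, ‖lam‖ ≤ 1 → ‖x + lam • y‖ ≤ 1 + δ) → ‖y‖ ≤ Ω δ)
    (n : ℕ) (hn : 1 ≤ n) (c α : ℝ) (hc : 0 < c) (hα0 : 0 ≤ α) (hα1 : α ≤ 1)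
    (f : EuclideanSpace ℂ (Fin n) → X)
    (hf : DifferentiableOn ℂ f (Metric.ball 0 1))
    (hlip : ∀ z ∈ Metric.ball (0 : EuclideanSpace ℂ (Fin n)) 1,
      ∀ w ∈ Metric.ball (0 : EuclideanSpace ℂ (Fin n)) 1,
        |‖f z‖ - ‖f w‖| ≤ c * ‖z - w‖ ^ α) :
    ∀ z ∈ Metric.ball (0 : EuclideanSpace ℂ (Fin n)) 1,
      ‖fderiv ℂ f z‖ ≤
        2 * (‖f 0‖ + c) * Ω (c * (‖f 0‖ + c)⁻¹ * (1 - ‖z‖) ^ α) / (1 - ‖z‖) := by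
  intro z hz
  have hz1 : ‖z‖ < 1 := mem_ball_zero_iff.mp hz
  set r := 1 - ‖z‖ with hr
  have hr0 : 0 < r := by linarith
  set K := ‖f 0‖ + c with hK
  have hK0 : 0 < K := by positivity
  have hδ : 0 < c * K⁻¹ * r ^ α := by positivity
  have hfzK : ‖f z‖ ≤ K := by
    have h1 := (abs_le.mp (hlip z hz 0 (by simp))).2
    have h2 : ‖z - 0‖ ^ α ≤ 1 := Real.rpow_le_one (norm_nonneg _) (by simpa using hz1.le) hα0
    nlinarith
  refine ContinuousLinearMap.opNorm_le_of_unit_norm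
    (by have := hΩpos _ hδ; positivity) fun v hv => ?_
  have hdist : ∀ ζ ∈ ball (0 : ℂ) 1, ‖(ζ * (r : ℂ)) • v‖ < r := fun ζ hζ => by
    have : ‖ζ‖ < 1 := mem_ball_zero_iff.mp hζ
    rw [norm_smul, hv, norm_mul, Complex.norm_real, Real.norm_of_nonneg hr0.le]
    nlinarith
  have hmem : MapsTo (fun ζ : ℂ => z + (ζ * (r : ℂ)) • v) (ball 0 1) (ball 0 1) := fun ζ hζ => by
    rw [mem_ball_zero_iff]
    linarith [norm_add_le z ((ζ * (r : ℂ)) • v), hdist ζ hζ]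
  have hgd : DifferentiableOn ℂ (fun ζ : ℂ => f (z + (ζ * (r : ℂ)) • v)) (ball 0 1) :=
    hf.comp (by fun_prop) hmem
  have hgM : ∀ ζ ∈ ball (0 : ℂ) 1, ‖f (z + (ζ * (r : ℂ)) • v)‖ ≤ ‖f z‖ + c * r ^ α :=
    fun ζ hζ => by
      have h1 := (abs_le.mp (hlip _ (hmem hζ) z hz)).2
      have h2 : ‖z + (ζ * (r : ℂ)) • v - z‖ ^ α ≤ r ^ α := by
        rw [add_sub_cancel_left]
        exact Real.rpow_le_rpow (norm_nonneg _) (hdist ζ hζ).le hα0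
      simp only at h1
      nlinarith
  have hderiv : deriv (fun ζ : ℂ => f (z + (ζ * (r : ℂ)) • v)) 0 = (r : ℂ) • fderiv ℂ f z v := by
    have hline : HasDerivAt (fun ζ : ℂ => z + (ζ * (r : ℂ)) • v) ((r : ℂ) • v) 0 := by
      simpa using (((hasDerivAt_id (0 : ℂ)).mul_const (r : ℂ)).smul_const v).const_add z
    have hfz : HasFDerivAt f (fderiv ℂ f z) (z + ((0 : ℂ) * (r : ℂ)) • v) := by
      simpa using (hf.differentiableAt (isOpen_ball.mem_nhds hz)).hasFDerivAt
    exact (hfz.comp_hasDerivAt (0 : ℂ) hline).deriv.trans (map_smul _ _ _)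
  -- Rescaling by `K⁻¹` puts `f z` in the closed unit ball.
  have hKinv : ‖((K : ℂ))⁻¹‖ = K⁻¹ := by
    rw [norm_inv, Complex.norm_real, Real.norm_of_nonneg hK0.le]
  have hy : ‖((K : ℂ))⁻¹ • ((1 / 2 : ℂ) • (r : ℂ) • fderiv ℂ f z v)‖ ≤ Ω (c * K⁻¹ * r ^ α) := by
    refine norm_le_modulus_of_norm_le_one hΩpos hucc (x := ((K : ℂ))⁻¹ • f z) ?_ hδ
      fun lam hlam => ?_
    · rw [norm_smul, hKinv, inv_mul_le_one₀ hK0]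
      exact hfzK
    · have h1 := norm_add_smul_deriv_le hgd hgM hlam
      rw [hderiv, zero_mul, zero_smul, add_zero] at h1
      rw [smul_comm lam, ← smul_add, norm_smul, norm_smul, hKinv]
      calc _ ≤ K⁻¹ * (‖f z‖ + c * r ^ α) := by gcongr
        _ = _ := by ring
  rw [norm_smul, norm_smul, norm_smul, hKinv, Complex.norm_real, Real.norm_of_nonneg hr0.le,
    show ‖(1 / 2 : ℂ)‖ = 1 / 2 by norm_num, inv_mul_le_iff₀ hK0] at hy
  rw [le_div_iff₀ hr0]
  linarith
end

section
/- Let X be a complex normed space that is uniformly c-convex with modulus Ω, let n ≥ 1, let c > 0 and α ∈ [0,1] be constants, and let f : 𝔹ⁿ → X be a holomorphic function with ‖f(0)‖ = 1 satisfying |‖f(z)‖ − ‖f(w)‖| ≤ c·‖z − w‖^α for all z, w ∈ 𝔹ⁿ. Then for every z ∈ 𝔹ⁿ one has ‖f'(z)‖ ≤ 2(1 + c)·Ω(c·(1 − ‖z‖)^α)/(1 − ‖z‖). -/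
open Metric Set Filter

/-!
Fix `z` in the ball, put `d = 1 - ‖z‖` and `δ = c * d ^ α`, and let `‖w‖ ≤ d`. Along the slice
`g lam = f (z + lam • w)`, `‖lam‖ < 1`, the hypothesis on `‖f‖` gives `‖g‖ ≤ ‖g 0‖ + δ`. The
Borel–Carathéodory inequality, applied to `ℓ ∘ g` for functionals `ℓ` of norm at most one, shows
that `‖g 0 + lam • (g'(0) / 2)‖ ≤ ‖g 0‖ + δ` for all `‖lam‖ ≤ 1` (`norm_add_smul_half_deriv_le`).
Working with functionals rather than with Cauchy integrals avoids completeness of `X`.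

The definition of uniform c-convexity requires a unit base point. If `‖g 0‖ ≤ 1`, replacing `g 0`
by a unit vector in its direction costs at most `1 - ‖g 0‖`, so `‖g'(0)‖ / 2 ≤ Ω δ`. If
`1 < ‖g 0‖`, dividing by `‖g 0‖` and monotonicity of `Ω` give `‖g'(0)‖ / 2 ≤ ‖g 0‖ * Ω δ`
(`norm_le_mul_modulus`). In both cases the factor is at most `1 + c`, because
`‖f z‖ ≤ ‖f 0‖ + c`. Since `g'(0) = f'(z) w` and `w` is an arbitrary vector of norm at most `d`,
the bound on the operator norm follows.
-/

/-- A derivative form of the Borel–Carathéodory inequality: the limit of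
`Complex.borelCaratheodory_zero` as the point tends to the centre. -/
theorem norm_deriv_le_two_mul_of_re_le {h : ℂ → ℂ} {h' : ℂ} {K : ℝ} (hK : (h 0).re < K)
    (hd : DifferentiableOn ℂ h (ball 0 1)) (hre : ∀ z ∈ ball (0 : ℂ) 1, (h z).re ≤ K)
    (hh' : HasDerivAt h h' 0) : ‖h'‖ ≤ 2 * (K - (h 0).re) := by
  have hM : 0 < K - (h 0).re := by linarith
  refine le_of_forall_gt_imp_ge_of_dense fun C hC => ?_
  have hlim : Tendsto (fun z : ℂ => 2 * (K - (h 0).re) / (1 - ‖z‖)) (nhds 0)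
      (nhds (2 * (K - (h 0).re))) := by
    have : ContinuousAt (fun z : ℂ => 2 * (K - (h 0).re) / (1 - ‖z‖)) 0 := by
      refine ContinuousAt.div (by fun_prop) (by fun_prop) (by simp)
    simpa [ContinuousAt] using this
  refine hh'.le_of_lip' (by linarith) ?_
  filter_upwards [hlim.eventually_lt_const hC, ball_mem_nhds (0 : ℂ) one_pos] with z hz hzb
  have := Complex.borelCaratheodory_zero (f := fun z => h z - h 0) hM (hd.sub_const _)
    (fun x hx => by simpa using hre x hx) one_pos hzb (by simp)
  calc ‖h z - h 0‖ ≤ 2 * (K - (h 0).re) * ‖z‖ / (1 - ‖z‖) := this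
    _ = 2 * (K - (h 0).re) / (1 - ‖z‖) * ‖z‖ := by ring
    _ ≤ C * ‖z - 0‖ := by rw [sub_zero]; gcongr

/-- If `g` is holomorphic and bounded by `K` on the unit disc, then so is its affine Taylor
polynomial at `0` with the linear coefficient halved. -/
theorem norm_add_smul_half_deriv_le {X : Type*} [NormedAddCommGroup X] [NormedSpace ℂ X]
    {g : ℂ → X} {g' : X} {K : ℝ} (hK : ‖g 0‖ < K)
    (hd : DifferentiableOn ℂ g (ball 0 1)) (hb : ∀ z ∈ ball (0 : ℂ) 1, ‖g z‖ ≤ K)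
    (hg' : HasDerivAt g g' 0) (lam : ℂ) (hlam : ‖lam‖ ≤ 1) :
    ‖g 0 + lam • ((1 / 2 : ℂ) • g')‖ ≤ K := by
  obtain ⟨l, hl1, hl⟩ := exists_dual_vector'' ℂ (g 0 + lam • ((1 / 2 : ℂ) • g'))
  have hre (x : X) : (l x).re ≤ ‖x‖ :=
    (Complex.re_le_norm _).trans ((l.le_of_opNorm_le hl1 x).trans_eq (one_mul _))
  have key := norm_deriv_le_two_mul_of_re_le (h := fun z => l (g z)) ((hre _).trans_lt hK)
    (l.differentiable.comp_differentiableOn hd) (fun z hz => (hre _).trans (hb z hz))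
    (l.hasFDerivAt.comp_hasDerivAt 0 hg')
  have hsum : ‖g 0 + lam • ((1 / 2 : ℂ) • g')‖ = (l (g 0)).re + (lam * (1 / 2 * l g')).re := by
    have := congrArg Complex.re hl
    rw [map_add, map_smul, map_smul, Complex.add_re] at this
    exact this.symm
  have hn : ‖lam * (1 / 2 * l g')‖ ≤ 1 * (1 / 2 * ‖l g'‖) := by
    rw [norm_mul, norm_mul]
    gcongr
    simp
  have := Complex.re_le_norm (lam * (1 / 2 * l g'))
  rw [hsum]
  linarith

/-- Uniform c-convexity at a base point `v` of arbitrary norm. The unit vector `e` serves as base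
point when `v = 0`. -/
theorem norm_le_mul_modulus {X : Type*} [NormedAddCommGroup X] [NormedSpace ℂ X]
    {Ω : ℝ → ℝ} (hΩmono : MonotoneOn Ω (Set.Ioi 0))
    (hucc : ∀ x y : X, ‖x‖ = 1 → ∀ δ : ℝ, 0 < δ →
      (∀ lam : ℂ, ‖lam‖ ≤ 1 → ‖x + lam • y‖ ≤ 1 + δ) → ‖y‖ ≤ Ω δ)
    {e v y : X} (he : ‖e‖ = 1) {δ : ℝ} (hδ : 0 < δ)
    (h : ∀ lam : ℂ, ‖lam‖ ≤ 1 → ‖v + lam • y‖ ≤ ‖v‖ + δ) :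
    ‖y‖ ≤ max 1 ‖v‖ * Ω δ := by
  rcases le_or_gt ‖v‖ 1 with hv | hv
  · rw [max_eq_left hv, one_mul]
    -- a unit vector at distance `1 - ‖v‖` from `v`
    obtain ⟨x, hx, hxv⟩ : ∃ x : X, ‖x‖ = 1 ∧ ‖x - v‖ ≤ 1 - ‖v‖ := by
      rcases eq_or_ne v 0 with rfl | hv0
      · exact ⟨e, he, by simp [he]⟩
      · have hpos : 0 < ‖v‖ := norm_pos_iff.2 hv0
        refine ⟨((‖v‖⁻¹ : ℝ) : ℂ) • v, ?_, ?_⟩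
        · rw [norm_smul, Complex.norm_real, norm_inv, norm_norm, inv_mul_cancel₀ hpos.ne']
        · have : ((‖v‖⁻¹ : ℝ) : ℂ) • v - v = ((‖v‖⁻¹ - 1 : ℝ) : ℂ) • v := by
            rw [Complex.ofReal_sub, sub_smul, Complex.ofReal_one, one_smul]
          have h1 : 0 ≤ ‖v‖⁻¹ - 1 := sub_nonneg.2 ((one_le_inv₀ hpos).2 hv)
          rw [this, norm_smul, Complex.norm_real, Real.norm_of_nonneg h1, sub_mul,
            inv_mul_cancel₀ hpos.ne', one_mul]
    refine hucc x y hx δ hδ fun lam hlam => ?_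
    calc ‖x + lam • y‖ = ‖(x - v) + (v + lam • y)‖ := by congr 1; abel
      _ ≤ ‖x - v‖ + ‖v + lam • y‖ := norm_add_le _ _
      _ ≤ 1 + δ := by linarith [h lam hlam]
  · rw [max_eq_right hv.le]
    have hpos : 0 < ‖v‖ := one_pos.trans hv
    have hnorm : ‖((‖v‖⁻¹ : ℝ) : ℂ)‖ = ‖v‖⁻¹ := by
      rw [Complex.norm_real, norm_inv, norm_norm]
    have hδ' : 0 < δ / ‖v‖ := by positivity
    have key := hucc (((‖v‖⁻¹ : ℝ) : ℂ) • v) (((‖v‖⁻¹ : ℝ) : ℂ) • y)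
      (by rw [norm_smul, hnorm, inv_mul_cancel₀ hpos.ne']) (δ / ‖v‖) hδ' fun lam hlam => by
        rw [smul_comm lam, ← smul_add, norm_smul, hnorm]
        calc ‖v‖⁻¹ * ‖v + lam • y‖ ≤ ‖v‖⁻¹ * (‖v‖ + δ) := by gcongr; exact h lam hlam
          _ = 1 + δ / ‖v‖ := by field_simp
    have hmono := hΩmono (mem_Ioi.2 hδ') (mem_Ioi.2 hδ) (div_le_self hδ.le hv.le)
    rw [norm_smul, hnorm] at key
    exact (inv_mul_le_iff₀ hpos).1 (key.trans hmono)

theorem lipschitz_modulus_fderiv_bound_normalized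
    {X : Type*} [NormedAddCommGroup X] [NormedSpace ℂ X]
    (Ω : ℝ → ℝ) (hΩpos : ∀ δ : ℝ, 0 < δ → 0 < Ω δ)
    (hΩmono : MonotoneOn Ω (Set.Ioi 0))
    (hΩ0 : Filter.Tendsto Ω (nhdsWithin 0 (Set.Ioi 0)) (nhds 0))
    (hucc : ∀ x y : X, ‖x‖ = 1 → ∀ δ : ℝ, 0 < δ →
      (∀ lam : ℂ, ‖lam‖ ≤ 1 → ‖x + lam • y‖ ≤ 1 + δ) → ‖y‖ ≤ Ω δ)
    (n : ℕ) (hn : 1 ≤ n) (c α : ℝ) (hc : 0 < c) (hα0 : 0 ≤ α) (hα1 : α ≤ 1)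
    (f : EuclideanSpace ℂ (Fin n) → X)
    (hf : DifferentiableOn ℂ f (Metric.ball 0 1))
    (hf0 : ‖f 0‖ = 1)
    (hlip : ∀ z ∈ Metric.ball (0 : EuclideanSpace ℂ (Fin n)) 1,
      ∀ w ∈ Metric.ball (0 : EuclideanSpace ℂ (Fin n)) 1,
        |‖f z‖ - ‖f w‖| ≤ c * ‖z - w‖ ^ α) :
    ∀ z ∈ Metric.ball (0 : EuclideanSpace ℂ (Fin n)) 1,
      ‖fderiv ℂ f z‖ ≤ 2 * (1 + c) * Ω (c * (1 - ‖z‖) ^ α) / (1 - ‖z‖) := by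
  intro z hz
  have hz1 : ‖z‖ < 1 := mem_ball_zero_iff.1 hz
  have hd : 0 < 1 - ‖z‖ := sub_pos.2 hz1
  have hδ : 0 < c * (1 - ‖z‖) ^ α := mul_pos hc (Real.rpow_pos_of_pos hd α)
  have hΩ := hΩpos _ hδ
  have hfz : max 1 ‖f z‖ ≤ 1 + c := by
    refine max_le (by linarith) ?_
    have h1 := (le_abs_self _).trans (hlip z hz 0 (by simp))
    have h2 : c * ‖z - 0‖ ^ α ≤ c * 1 := by
      rw [sub_zero]
      gcongr
      exact Real.rpow_le_one (norm_nonneg _) hz1.le hα0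
    linarith
  have main (w : EuclideanSpace ℂ (Fin n)) (hw : ‖w‖ ≤ 1 - ‖z‖) :
      ‖fderiv ℂ f z w‖ ≤ 2 * (1 + c) * Ω (c * (1 - ‖z‖) ^ α) := by
    have hlw (lam : ℂ) (hlam : lam ∈ ball (0 : ℂ) 1) :
        ‖lam • w‖ ≤ 1 - ‖z‖ ∧ z + lam • w ∈ ball (0 : EuclideanSpace ℂ (Fin n)) 1 := by
      have hl : ‖lam‖ < 1 := mem_ball_zero_iff.1 hlam
      have h1 : ‖lam • w‖ < 1 - ‖z‖ := by
        rw [norm_smul]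
        calc ‖lam‖ * ‖w‖ ≤ ‖lam‖ * (1 - ‖z‖) := by gcongr
          _ < 1 * (1 - ‖z‖) := by gcongr
          _ = 1 - ‖z‖ := one_mul _
      exact ⟨h1.le, mem_ball_zero_iff.2 (by linarith [norm_add_le z (lam • w)])⟩
    have hline (lam : ℂ) : HasDerivAt (fun t : ℂ => z + t • w) w lam := by
      simpa using ((hasDerivAt_id lam).smul_const w).const_add z
    have hder : HasDerivAt (fun t : ℂ => f (z + t • w)) (fderiv ℂ f z w) 0 := by
      have hfd : HasFDerivAt f (fderiv ℂ f z) (z + (0 : ℂ) • w) := by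
        simpa using (hf.differentiableAt (isOpen_ball.mem_nhds hz)).hasFDerivAt
      exact hfd.comp_hasDerivAt (0 : ℂ) (hline 0)
    have hhalf := norm_le_mul_modulus hΩmono hucc (v := f z)
      (y := (1 / 2 : ℂ) • fderiv ℂ f z w) hf0 hδ fun lam hlam => by
        have := norm_add_smul_half_deriv_le (g := fun t : ℂ => f (z + t • w))
          (K := ‖f z‖ + c * (1 - ‖z‖) ^ α) (by simpa using hδ)
          (hf.comp (fun t _ => (hline t).differentiableAt.differentiableWithinAt)
            fun t ht => (hlw t ht).2)
          (fun t ht => by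
            have h1 := (le_abs_self _).trans (hlip _ (hlw t ht).2 z hz)
            rw [add_sub_cancel_left] at h1
            have h2 : c * ‖t • w‖ ^ α ≤ c * (1 - ‖z‖) ^ α := by
              gcongr
              exact (hlw t ht).1
            linarith)
          hder lam hlam
        simpa using this
    have hle : max 1 ‖f z‖ * Ω (c * (1 - ‖z‖) ^ α) ≤ (1 + c) * Ω (c * (1 - ‖z‖) ^ α) := by
      gcongr
    have heq : ‖(1 / 2 : ℂ) • fderiv ℂ f z w‖ = 1 / 2 * ‖fderiv ℂ f z w‖ := by
      rw [norm_smul]; simp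
    linarith
  refine ContinuousLinearMap.opNorm_le_of_unit_norm (by positivity) fun u hu => ?_
  have h := main (((1 - ‖z‖ : ℝ) : ℂ) • u) (by
    rw [norm_smul, hu, mul_one, Complex.norm_real, Real.norm_of_nonneg hd.le])
  rw [map_smul, norm_smul, Complex.norm_real, Real.norm_of_nonneg hd.le] at h
  rwa [le_div_iff₀ hd, mul_comm]
end

section
/- Let X be a complex normed space that is uniformly c-convex with modulus Ω, let n ≥ 1, let c > 0 and α ∈ [0,1] be constants, and let f : 𝔹ⁿ → X be a holomorphic function satisfying |‖f(z)‖ − ‖f(w)‖| ≤ c·(1 − ‖z‖)^α for all z, w ∈ 𝔹ⁿ with ‖w − z‖ ≤ 1 − ‖z‖. Then for every z ∈ 𝔹ⁿ one has ‖f'(z)‖ ≤ 2K·Ω(c·K⁻¹·(1 − ‖z‖)^α)/(1 − ‖z‖), where K = ‖f(0)‖ + c. -/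
/-!
Fix `z` in the ball, put `r = 1 - ‖z‖`, and restrict `f` to the complex disc `λ ↦ z + λ r v`, where
`‖v‖ = 1`. On the unit disc this slice is bounded in norm by `‖f z‖ + c r ^ α`. For a
holomorphic function `F` on the unit disc bounded by `M` one has `‖F 0 + (λ / 2) F' 0‖ ≤ M` for
`‖λ‖ ≤ 1` (`norm_add_half_deriv_le`); after applying a norming functional this is the scalar
inequality `‖h' 0‖ ≤ 2 (M - ‖h 0‖)`, a consequence of the Borel–Carathéodory theorem
(`norm_deriv_zero_le`). Hence `x = f z` and `y = (r / 2) f'(z) v` satisfy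
`‖x + λ y‖ ≤ ‖x‖ + c r ^ α`.

The hypothesis at the origin gives `‖x‖ ≤ K = ‖f 0‖ + c`. Uniform c-convexity is applied to the unit
vector `x / ‖x‖` and to `y / K`, rather than to `y / ‖x‖`: this yields `‖y‖ ≤ K Ω (c K⁻¹ r ^ α)`
directly (`norm_le_mul_modulus`), with no comparison of values of `Ω` at different scales.
-/

open Metric Set Filter

/-- A holomorphic function `h` on the unit disc bounded by `M` satisfies
`‖h' 0‖ ≤ 2 (M - ‖h 0‖)`: rotate `h` so that `h 0 ≥ 0`, then use that `h - h 0` has real part at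
most `M - ‖h 0‖`. -/
lemma norm_deriv_zero_le {h : ℂ → ℂ} {M : ℝ} (hd : DifferentiableOn ℂ h (ball 0 1))
    (hM : ∀ w ∈ ball (0 : ℂ) 1, ‖h w‖ ≤ M) : ‖deriv h 0‖ ≤ 2 * (M - ‖h 0‖) := by
  obtain ⟨θ, hθ, hθ0⟩ : ∃ θ : ℂ, ‖θ‖ = 1 ∧ (‖h 0‖ : ℂ) = θ * h 0 :=
    RCLike.exists_norm_eq_mul_self (h 0)
  have h0M : ‖h 0‖ ≤ M := hM 0 (by simp)
  -- Borel–Carathéodory needs a strictly positive bound on the real part, whence the slack `A`.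
  have key : ∀ A : ℝ, M - ‖h 0‖ < A → ‖deriv h 0‖ ≤ 2 * A := by
    intro A hA
    have hA0 : 0 < A := by linarith
    have hbc : ∀ w ∈ ball (0 : ℂ) 1, ‖h w - h 0‖ ≤ 2 * A * ‖w‖ / (1 - ‖w‖) := by
      intro w hw
      have := Complex.borelCaratheodory_zero (f := fun w => θ * h w - θ * h 0) hA0
        (by fun_prop) (R := 1) ?_ one_pos hw (by simp)
      · simpa [← mul_sub, hθ] using this
      · intro x hx
        have h1 : (θ * h x).re ≤ M :=
          (Complex.re_le_norm _).trans (by simpa [hθ] using hM x hx)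
        simp only [Set.mem_ofPred_eq, ← hθ0, Complex.sub_re, Complex.ofReal_re]
        linarith
    -- The Schwarz lemma on a small disc of radius `s` gives the bound up to the factor `1 - s`.
    have hs : ∀ s : ℝ, 0 < s → s < 1 → ‖deriv h 0‖ * (1 - s) ≤ 2 * A := by
      intro s hs0 hs1
      have hsub : ball (0 : ℂ) s ⊆ ball 0 1 := ball_subset_ball hs1.le
      have h2 := Complex.norm_deriv_le_div_of_mapsTo_ball (f := h) (c := 0) (R₁ := s)
        (R₂ := 2 * A * s / (1 - s)) (hd.mono hsub) ?_ hs0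
      · have h3 : 0 < 1 - s := by linarith
        rw [← le_div_iff₀ h3]
        refine h2.trans_eq ?_
        field_simp
      · intro w hw
        rw [mem_closedBall, dist_eq_norm]
        have hws : ‖w‖ < s := by simpa using hw
        refine (hbc w (hsub hw)).trans ?_
        have h3 : 0 < 1 - s := by linarith
        gcongr
    by_contra! hlt
    have hD : 0 < ‖deriv h 0‖ := by linarith
    have h4 := hs ((‖deriv h 0‖ - 2 * A) / (2 * ‖deriv h 0‖)) (by apply div_pos <;> linarith)
      (by rw [div_lt_one (by positivity)]; linarith)
    have h5 : ‖deriv h 0‖ * (1 - (‖deriv h 0‖ - 2 * A) / (2 * ‖deriv h 0‖))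
        = (‖deriv h 0‖ + 2 * A) / 2 := by
      field_simp
      ring
    linarith
  by_contra! hlt
  have := key ((M - ‖h 0‖ + ‖deriv h 0‖ / 2) / 2) (by linarith)
  linarith

/-- Vector-valued form of `norm_deriv_zero_le`. Completeness of `X` is not required, since the
estimate is tested on continuous linear functionals. -/
lemma norm_add_half_deriv_le {X : Type*} [NormedAddCommGroup X] [NormedSpace ℂ X] {F : ℂ → X}
    {F' : X} {M : ℝ} (hd : DifferentiableOn ℂ F (ball 0 1)) (hF' : HasDerivAt F F' 0)
    (hM : ∀ w ∈ ball (0 : ℂ) 1, ‖F w‖ ≤ M) {lam : ℂ} (hlam : ‖lam‖ ≤ 1) :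
    ‖F 0 + lam • (2⁻¹ : ℂ) • F'‖ ≤ M := by
  obtain ⟨φ, hφ, hφx⟩ := exists_dual_vector'' ℂ (F 0 + lam • (2⁻¹ : ℂ) • F')
  have hder : HasDerivAt (fun w => φ (F w)) (φ F') 0 := φ.hasFDerivAt.comp_hasDerivAt 0 hF'
  have h1 := norm_deriv_zero_le (h := fun w => φ (F w)) (M := M)
    (φ.differentiable.comp_differentiableOn hd)
    (fun w hw => (φ.le_of_opNorm_le hφ _).trans (by simpa using hM w hw))
  rw [hder.deriv] at h1
  have h2 : ‖F 0 + lam • (2⁻¹ : ℂ) • F'‖ = ‖φ (F 0) + lam * (2⁻¹ * φ F')‖ := by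
    rw [show φ (F 0) + lam * (2⁻¹ * φ F') = φ (F 0 + lam • (2⁻¹ : ℂ) • F') by simp, hφx]
    simp
  have h3 : ‖lam * (2⁻¹ * φ F')‖ ≤ 1 * (2⁻¹ * ‖φ F'‖) := by
    rw [norm_mul, norm_mul]
    gcongr
    simp
  rw [h2]
  refine (norm_add_le _ _).trans ?_
  linarith

/-- Scaled form of uniform c-convexity: the base point `x` only has to satisfy `‖x‖ ≤ K`, and the
conclusion is expressed through `K` alone. -/
lemma norm_le_mul_modulus_s2 {X : Type*} [NormedAddCommGroup X] [NormedSpace ℂ X]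
    {Ω : ℝ → ℝ} (hΩpos : ∀ δ : ℝ, 0 < δ → 0 < Ω δ)
    (hucc : ∀ x y : X, ‖x‖ = 1 → ∀ δ : ℝ, 0 < δ →
      (∀ lam : ℂ, ‖lam‖ ≤ 1 → ‖x + lam • y‖ ≤ 1 + δ) → ‖y‖ ≤ Ω δ)
    {x y : X} {K a : ℝ} (hK : 0 < K) (ha : 0 < a) (hxK : ‖x‖ ≤ K)
    (h : ∀ lam : ℂ, ‖lam‖ ≤ 1 → ‖x + lam • y‖ ≤ ‖x‖ + a) : ‖y‖ ≤ K * Ω (a / K) := by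
  have hδ : 0 < a / K := by positivity
  by_cases hy : y = 0
  · have := hΩpos _ hδ
    rw [hy, norm_zero]
    positivity
  -- `e` is the direction of `x`, or an arbitrary unit vector when `x = 0`.
  obtain ⟨e, he, hex⟩ : ∃ e : X, ‖e‖ = 1 ∧ x = (‖x‖ : ℂ) • e := by
    by_cases hx : x = 0
    · refine ⟨((‖y‖ : ℂ)⁻¹) • y, ?_, by simp [hx]⟩
      simp [norm_smul, hy]
    · refine ⟨((‖x‖ : ℂ)⁻¹) • x, ?_, ?_⟩
      · simp [norm_smul, hx]
      · rw [smul_inv_smul₀ (by simpa using hx)]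
  have hKy : ‖((K : ℂ)⁻¹) • y‖ ≤ Ω (a / K) := by
    refine hucc e _ he _ hδ fun lam hlam => ?_
    have hKc : (K : ℂ) ≠ 0 := by exact_mod_cast hK.ne'
    have hsplit : e + lam • (K : ℂ)⁻¹ • y
        = (K : ℂ)⁻¹ • (x + lam • y) + ((1 - ‖x‖ / K : ℝ) : ℂ) • e := by
      nth_rewrite 1 [hex]
      push_cast
      module
    have hnn : 0 ≤ 1 - ‖x‖ / K := by
      rw [sub_nonneg, div_le_one hK]
      exact hxK
    rw [hsplit]
    refine (norm_add_le _ _).trans ?_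
    rw [norm_smul, norm_smul, he, norm_inv, Complex.norm_of_nonneg hK.le,
      Complex.norm_of_nonneg hnn]
    calc K⁻¹ * ‖x + lam • y‖ + (1 - ‖x‖ / K) * 1
        ≤ K⁻¹ * (‖x‖ + a) + (1 - ‖x‖ / K) * 1 := by
          gcongr
          exact h lam hlam
      _ = 1 + a / K := by
          field_simp
          ring
  rwa [norm_smul, norm_inv, Complex.norm_of_nonneg hK.le, inv_mul_le_iff₀ hK] at hKy

theorem local_lipschitz_modulus_fderiv_bound
    {X : Type*} [NormedAddCommGroup X] [NormedSpace ℂ X]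
    (Ω : ℝ → ℝ) (hΩpos : ∀ δ : ℝ, 0 < δ → 0 < Ω δ)
    (hΩmono : MonotoneOn Ω (Set.Ioi 0))
    (hΩ0 : Filter.Tendsto Ω (nhdsWithin 0 (Set.Ioi 0)) (nhds 0))
    (hucc : ∀ x y : X, ‖x‖ = 1 → ∀ δ : ℝ, 0 < δ →
      (∀ lam : ℂ, ‖lam‖ ≤ 1 → ‖x + lam • y‖ ≤ 1 + δ) → ‖y‖ ≤ Ω δ)
    (n : ℕ) (hn : 1 ≤ n) (c α : ℝ) (hc : 0 < c) (hα0 : 0 ≤ α) (hα1 : α ≤ 1)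
    (f : EuclideanSpace ℂ (Fin n) → X)
    (hf : DifferentiableOn ℂ f (Metric.ball 0 1))
    (hlip : ∀ z ∈ Metric.ball (0 : EuclideanSpace ℂ (Fin n)) 1,
      ∀ w ∈ Metric.ball (0 : EuclideanSpace ℂ (Fin n)) 1,
        ‖w - z‖ ≤ 1 - ‖z‖ → |‖f z‖ - ‖f w‖| ≤ c * (1 - ‖z‖) ^ α) :
    ∀ z ∈ Metric.ball (0 : EuclideanSpace ℂ (Fin n)) 1,
      ‖fderiv ℂ f z‖ ≤
        2 * (‖f 0‖ + c) * Ω (c * (‖f 0‖ + c)⁻¹ * (1 - ‖z‖) ^ α) / (1 - ‖z‖) := by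
  intro z hz
  have hz1 : ‖z‖ < 1 := by simpa using hz
  have hr : 0 < 1 - ‖z‖ := by linarith
  set r := 1 - ‖z‖ with hrdef
  set K := ‖f 0‖ + c with hKdef
  have hK : 0 < K := by positivity
  have ha : 0 < c * r ^ α := by positivity
  have hfzK : ‖f z‖ ≤ K := by
    have := (abs_le.1 (hlip 0 (by simp) z hz (by simpa using hz1.le))).1
    simp only [norm_zero, sub_zero, Real.one_rpow, mul_one] at this
    linarith
  have hΩeq : c * K⁻¹ * r ^ α = c * r ^ α / K := by
    field_simp
  rw [hΩeq]
  have hΩp := hΩpos (c * r ^ α / K) (by positivity)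
  refine ContinuousLinearMap.opNorm_le_of_unit_norm (by positivity) fun v hv => ?_
  have hmem : ∀ w ∈ ball (0 : ℂ) 1, ‖w • (r : ℂ) • v‖ < r := by
    intro w hw
    have hw1 : ‖w‖ < 1 := by simpa using hw
    rw [norm_smul, norm_smul, hv, Complex.norm_of_nonneg hr.le]
    nlinarith
  have hball : ∀ w ∈ ball (0 : ℂ) 1, z + w • (r : ℂ) • v ∈
      ball (0 : EuclideanSpace ℂ (Fin n)) 1 := by
    intro w hw
    have := norm_add_le z (w • (r : ℂ) • v)
    have := hmem w hw
    rw [mem_ball_zero_iff]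
    linarith
  have hfz : HasFDerivAt f (fderiv ℂ f z) z :=
    (hf.differentiableAt (isOpen_ball.mem_nhds hz)).hasFDerivAt
  have hline : HasDerivAt (fun w : ℂ => z + w • (r : ℂ) • v) ((r : ℂ) • v) 0 := by
    simpa using ((hasDerivAt_id (0 : ℂ)).smul_const ((r : ℂ) • v)).const_add z
  have hF' : HasDerivAt (fun w : ℂ => f (z + w • (r : ℂ) • v))
      (fderiv ℂ f z ((r : ℂ) • v)) 0 :=
    HasFDerivAt.comp_hasDerivAt (0 : ℂ) (by simpa using hfz) hline
  have hd : DifferentiableOn ℂ (fun w : ℂ => f (z + w • (r : ℂ) • v)) (ball 0 1) :=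
    hf.comp (by fun_prop) hball
  have hM : ∀ w ∈ ball (0 : ℂ) 1, ‖f (z + w • (r : ℂ) • v)‖ ≤ ‖f z‖ + c * r ^ α := by
    intro w hw
    have := (abs_le.1 (hlip z hz _ (hball w hw) (by simpa using (hmem w hw).le))).1
    linarith
  have hy := norm_le_mul_modulus_s2 hΩpos hucc hK ha hfzK
    (y := (2⁻¹ : ℂ) • fderiv ℂ f z ((r : ℂ) • v)) fun lam hlam => by
      simpa using norm_add_half_deriv_le hd hF' hM hlam
  rw [map_smul, norm_smul, norm_smul, Complex.norm_of_nonneg hr.le, norm_inv,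
    Complex.norm_ofNat] at hy
  rw [le_div_iff₀ hr]
  linarith
end

section
/- Let n ≥ 1, let φ : 𝔹ⁿ → ℂ be holomorphic, fix z ∈ 𝔹ⁿ, and suppose M_z = sup{|φ(w)| : w ∈ ℂⁿ, ‖w − z‖ < 1 − ‖z‖} is finite. Then (1/2)·(1 − ‖z‖)·‖φ'(z)‖ + |φ(z)| ≤ M_z. -/
/-!
Only the Schwarz lemma on the ball `B = B(z, 1 - ‖z‖)`, which lies in the unit ball, is needed.
Let `M` be a strict upper bound of `|φ|` on `B`, and rotate `φ` so that its value at `z` becomes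
`a = |φ(z)|`. The rotated function `f` takes values in the half-plane `Re < M`, and the Cayley
transform `w ↦ (w - a) / (2 M - a - w)` maps this half-plane to the unit disc, sends `a` to `0`,
and has derivative `1 / (2 (M - a))` at `a`. The Schwarz lemma for its composition with `f` gives
`(1 - ‖z‖) ‖φ'(z)‖ ≤ 2 (M - a)`. Letting `M` decrease to the supremum gives the claim; passing
through strict bounds avoids a separate treatment of the case `|φ(z)| = M_z`.
-/

open Metric Set Filter

/-- The Cayley transform of the half-plane `Re < M` centred at a real point `a < M` takes values
in the unit disc: `w` is closer to `a` than to `2 * M - a`, the reflection of `a` in the line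
`Re = M`. -/
lemma norm_cayley_lt_one {a M : ℝ} (ha : a < M) {w : ℂ} (hw : w.re < M) :
    2 * (M : ℂ) - a - w ≠ 0 ∧ ‖(w - a) / (2 * (M : ℂ) - a - w)‖ < 1 := by
  have hne : 2 * (M : ℂ) - a - w ≠ 0 := by
    intro h
    have := congrArg Complex.re h
    simp at this
    linarith
  refine ⟨hne, ?_⟩
  rw [norm_div, div_lt_one (norm_pos_iff.2 hne), ← sq_lt_sq₀ (norm_nonneg _) (norm_nonneg _),
    Complex.sq_norm, Complex.sq_norm, Complex.normSq_apply, Complex.normSq_apply]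
  simp
  nlinarith [mul_pos (sub_pos.2 ha) (sub_pos.2 hw)]

/-- The derivative estimate for a strict upper bound `M` of `‖f‖`, at a point where the value
of `f` is real and nonnegative. -/
lemma mul_norm_fderiv_le_of_real {E : Type*} [NormedAddCommGroup E] [NormedSpace ℂ E]
    {f : E → ℂ} {z : E} {R M a : ℝ} (hR : 0 < R) (hf : DifferentiableOn ℂ f (ball z R))
    (hM : ∀ w ∈ ball z R, ‖f w‖ < M) (ha : 0 ≤ a) (hfz : f z = a) :
    R * ‖fderiv ℂ f z‖ ≤ 2 * (M - a) := by
  have hz : z ∈ ball z R := mem_ball_self hR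
  have haM : a < M := by
    have := hM z hz
    rwa [hfz, Complex.norm_real, Real.norm_of_nonneg ha] at this
  have hre : ∀ w ∈ ball z R, (f w).re < M := fun w hw =>
    (Complex.re_le_norm _).trans_lt (hM w hw)
  let C : ℂ → ℂ := fun w => (w - a) / (2 * (M : ℂ) - a - w)
  have hC0 : C (f z) = 0 := by simp [C, hfz]
  have hd : DifferentiableOn ℂ (fun w => C (f w)) (ball z R) :=
    fun w hw => by
      have hne := (norm_cayley_lt_one haM (hre w hw)).1
      have hC : DifferentiableAt ℂ C (f w) := by fun_prop (disch := exact hne)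
      exact hC.comp_differentiableWithinAt w (hf w hw)
  have hmaps : MapsTo (fun w => C (f w)) (ball z R) (ball (C (f z)) 1) := by
    intro w hw
    rw [hC0, mem_ball_zero_iff]
    exact (norm_cayley_lt_one haM (hre w hw)).2
  have hS := Complex.norm_fderiv_le_div_of_mapsTo_ball hd (hmaps.mono_right ball_subset_closedBall)
    hR
  have hMa : (2 * ((M : ℂ) - a)) ≠ 0 := by
    exact_mod_cast (mul_pos two_pos (sub_pos.2 haM)).ne'
  have hCd : HasDerivAt C (1 / (2 * ((M : ℂ) - a))) (f z) := by
    have h2 : 2 * (M : ℂ) - a - f z ≠ 0 := (norm_cayley_lt_one haM (hre z hz)).1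
    have h := ((hasDerivAt_id (f z)).sub_const (a : ℂ)).div
      ((hasDerivAt_id (f z)).const_sub (2 * (M : ℂ) - a)) h2
    refine HasDerivAt.congr_deriv (f := C) h ?_
    have h3 : 2 * (M : ℂ) - a - a = 2 * ((M : ℂ) - a) := by ring
    simp only [id, hfz, h3]
    rw [sub_self, zero_mul, sub_zero, one_mul, pow_two, div_mul_cancel_left₀ hMa, one_div]
  have hfd : HasFDerivAt f (fderiv ℂ f z) z :=
    (hf.differentiableAt (ball_mem_nhds z hR)).hasFDerivAt
  have hcomp := (hCd.comp_hasFDerivAt z hfd).fderiv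
  change fderiv ℂ (fun w => C (f w)) z = _ at hcomp
  have hn : ‖(2 * ((M : ℂ) - a))‖ = 2 * (M - a) := by
    rw [show (2 * ((M : ℂ) - a)) = ((2 * (M - a) : ℝ) : ℂ) by push_cast; ring,
      Complex.norm_real, Real.norm_of_nonneg (by linarith)]
  rw [hcomp, norm_smul, norm_div, norm_one, hn, one_div, inv_mul_le_iff₀ (by linarith),
    mul_one_div, le_div_iff₀ hR] at hS
  linarith

theorem schwarz_pick_scalar_on_ball
    (n : ℕ) (hn : 1 ≤ n)
    (φ : EuclideanSpace ℂ (Fin n) → ℂ)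
    (hφ : DifferentiableOn ℂ φ (Metric.ball 0 1))
    (z : EuclideanSpace ℂ (Fin n)) (hz : z ∈ Metric.ball (0 : EuclideanSpace ℂ (Fin n)) 1)
    (hbdd : BddAbove ((fun w => ‖φ w‖) '' Metric.ball z (1 - ‖z‖))) :
    (1 / 2) * (1 - ‖z‖) * ‖fderiv ℂ φ z‖ + ‖φ z‖ ≤
      sSup ((fun w => ‖φ w‖) '' Metric.ball z (1 - ‖z‖)) := by
  have hR : 0 < 1 - ‖z‖ := sub_pos.2 (mem_ball_zero_iff.1 hz)
  have hφB : DifferentiableOn ℂ φ (ball z (1 - ‖z‖)) :=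
    hφ.mono (ball_subset_ball' (by simp))
  refine le_of_forall_pos_le_add fun ε hε => ?_
  obtain ⟨c, hc, hcz⟩ := RCLike.exists_norm_eq_mul_self (φ z)
  have key := mul_norm_fderiv_le_of_real hR (hφB.const_mul c)
    (M := sSup ((fun w => ‖φ w‖) '' ball z (1 - ‖z‖)) + ε)
    (fun w hw => by
      rw [norm_mul, hc, one_mul]
      exact (le_csSup hbdd (mem_image_of_mem _ hw)).trans_lt (lt_add_of_pos_right _ hε))
    (norm_nonneg (φ z)) hcz.symm
  rw [fderiv_const_mul (hφB.differentiableAt (ball_mem_nhds z hR)), norm_smul, hc, one_mul] at key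
  linarith
end

section
/- Let n ≥ 1, let ω be a Dini majorant, and let u : 𝔹ⁿ → ℝ be a C¹-function (with respect to the underlying real structure of ℂⁿ) satisfying ‖∇u(z)‖ ≤ ω(1 − ‖z‖)/(1 − ‖z‖) for every z ∈ 𝔹ⁿ, where ‖∇u(z)‖ denotes the norm of the real Fréchet derivative of u at z. Then |u(a) − u(b)| ≤ 3·ω̃(‖a − b‖) for all a, b ∈ 𝔹ⁿ. -/
/-!
Write `ψ t = ω t / t`, a nonnegative nonincreasing function, put `d = ‖a - b‖`, `e = min d 1`, and
shrink `a` and `b` radially to their nearest points `a'`, `b'` in the closed ball of radius `1 - e`.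

* Along the radius from `a` to `a'` the gradient bound integrates to `∫ ψ` over `(1 - ‖a‖, e]`, so
  `|u a - u a'| ≤ ω̃ e`, and likewise for `b` (`radial_estimate`).
* Nearest-point projection onto a ball is nonexpansive (`norm_retract_sub_le`), so
  `‖a' - b'‖ ≤ e`. On the closed ball of radius `1 - e` the gradient is at most `ψ e`, hence
  `|u a' - u b'| ≤ e * ψ e ≤ ∫₀ᵉ ψ = ω̃ e`, because `ψ` is nonincreasing.

The three estimates add up to `3 * ω̃ e ≤ 3 * ω̃ d`.
-/

open Metric Set Filter

/-- A majorant: continuous, increasing, vanishing at `0`, with `t ↦ ω t / t`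
nonincreasing on `(0, ∞)`. -/
def Majorant (ω : ℝ → ℝ) : Prop :=
  ContinuousOn ω (Set.Ici 0) ∧ MonotoneOn ω (Set.Ici 0) ∧ ω 0 = 0 ∧
    AntitoneOn (fun t => ω t / t) (Set.Ioi 0)

/-- A Dini majorant: a majorant with `∫₀¹ ω t / t dt < ∞`. -/
def DiniMajorant (ω : ℝ → ℝ) : Prop :=
  Majorant ω ∧ MeasureTheory.IntegrableOn (fun t => ω t / t) (Set.Ioc 0 1)

/-- `ω̃ t = ∫₀ᵗ ω x / x dx`. -/
noncomputable def omegaTilde (ω : ℝ → ℝ) (t : ℝ) : ℝ :=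
  ∫ x in Set.Ioc 0 t, ω x / x

theorem DiniMajorant.div_nonneg {ω : ℝ → ℝ} (hω : DiniMajorant ω) {t : ℝ} (ht : 0 ≤ t) :
    0 ≤ ω t / t := by
  obtain ⟨⟨-, hm, h0, -⟩, -⟩ := hω
  have : ω 0 ≤ ω t := hm (Set.mem_Ici.2 le_rfl) (Set.mem_Ici.2 ht) ht
  exact _root_.div_nonneg (h0 ▸ this) ht

theorem DiniMajorant.continuousOn_div {ω : ℝ → ℝ} (hω : DiniMajorant ω) :
    ContinuousOn (fun t => ω t / t) (Set.Ioi 0) :=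
  (hω.1.1.mono Set.Ioi_subset_Ici_self).div continuousOn_id fun _ ht => ne_of_gt ht

theorem DiniMajorant.integrableOn {ω : ℝ → ℝ} (hω : DiniMajorant ω) (T : ℝ) :
    MeasureTheory.IntegrableOn (fun t => ω t / t) (Set.Ioc 0 T) := by
  have h2 : MeasureTheory.IntegrableOn (fun t => ω t / t) (Set.Icc 1 T) :=
    (hω.continuousOn_div.mono fun t ht => lt_of_lt_of_le one_pos ht.1).integrableOn_Icc
  refine (hω.2.union h2).mono_set fun t ht => ?_
  rcases le_total t 1 with h | h
  · exact Or.inl ⟨ht.1, h⟩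
  · exact Or.inr ⟨h, ht.2⟩

theorem DiniMajorant.setIntegral_le {ω : ℝ → ℝ} (hω : DiniMajorant ω) {r s T : ℝ}
    (hr : 0 ≤ r) (hsT : s ≤ T) :
    ∫ x in Set.Ioc r s, ω x / x ≤ omegaTilde ω T := by
  refine MeasureTheory.setIntegral_mono_set (hω.integrableOn T) ?_
    (Set.Ioc_subset_Ioc hr hsT).eventuallyLE
  refine (MeasureTheory.ae_restrict_iff' measurableSet_Ioc).2 (Filter.Eventually.of_forall ?_)
  exact fun x hx => hω.div_nonneg hx.1.le

/-- `e * ψ e ≤ ∫₀ᵉ ψ`, since `ψ t = ω t / t` is nonincreasing. -/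
theorem DiniMajorant.mul_le_omegaTilde {ω : ℝ → ℝ} (hω : DiniMajorant ω) {e : ℝ} (he : 0 ≤ e) :
    ω e / e * e ≤ omegaTilde ω e := by
  have h := MeasureTheory.setIntegral_mono_on (μ := MeasureTheory.volume)
    (f := fun _ => ω e / e) (g := fun t => ω t / t) (s := Set.Ioc 0 e)
    (by simp) (hω.integrableOn e) measurableSet_Ioc
    (fun t ht => hω.1.2.2.2 (Set.mem_Ioi.2 ht.1) (Set.mem_Ioi.2 (ht.1.trans_le ht.2)) ht.2)
  simpa [omegaTilde, he, mul_comm] using h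

/-- The nearest point to `a` in the closed ball of radius `ρ` is `s • a`, where either `s = 1`
or `s • a` lies on the bounding sphere. -/
theorem exists_retract {E : Type*} [NormedAddCommGroup E] [NormedSpace ℝ E] (a : E) {ρ : ℝ}
    (hρ : 0 ≤ ρ) :
    ∃ s : ℝ, 0 ≤ s ∧ s ≤ 1 ∧ s * ‖a‖ ≤ ρ ∧ (s = 1 ∨ s * ‖a‖ = ρ) := by
  rcases le_or_gt ‖a‖ ρ with h | h
  · exact ⟨1, zero_le_one, le_rfl, by simpa using h, Or.inl rfl⟩
  · have ha : 0 < ‖a‖ := hρ.trans_lt h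
    have : ρ / ‖a‖ * ‖a‖ = ρ := div_mul_cancel₀ _ ha.ne'
    exact ⟨ρ / ‖a‖, by positivity, (div_le_one ha).2 h.le, this.le, Or.inr this⟩

/-- The obtuse-angle property of the nearest-point projection `a ↦ s • a` onto a ball. -/
theorem inner_retract_nonpos {E : Type*} [NormedAddCommGroup E] [InnerProductSpace ℝ E] {a y : E}
    {ρ s : ℝ} (hs1 : s ≤ 1) (hs : s = 1 ∨ s * ‖a‖ = ρ) (hy : ‖y‖ ≤ ρ) :
    inner ℝ (a - s • a) (y - s • a) ≤ 0 := by
  rcases hs with rfl | hs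
  · simp
  · have h1 : inner ℝ a y ≤ ‖a‖ * ρ :=
      (real_inner_le_norm a y).trans (mul_le_mul_of_nonneg_left hy (norm_nonneg a))
    have h2 : inner ℝ (a - s • a) (y - s • a) = (1 - s) * (inner ℝ a y - s * ‖a‖ ^ 2) := by
      simp only [inner_sub_left, inner_sub_right, real_inner_smul_left, real_inner_smul_right]
      rw [real_inner_self_eq_norm_sq]
      ring
    rw [h2]
    refine mul_nonpos_of_nonneg_of_nonpos (by linarith) ?_
    rw [← hs] at h1
    nlinarith

/-- Nearest-point projection onto a ball centred at the origin is nonexpansive: the two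
obtuse-angle inequalities add up to `‖a' - b'‖² ≤ ⟪a - b, a' - b'⟫`. -/
theorem norm_retract_sub_le {E : Type*} [NormedAddCommGroup E] [InnerProductSpace ℝ E] {a b : E}
    {ρ s t : ℝ} (hs0 : 0 ≤ s) (hs1 : s ≤ 1) (hsρ : s * ‖a‖ ≤ ρ) (hs : s = 1 ∨ s * ‖a‖ = ρ)
    (ht0 : 0 ≤ t) (ht1 : t ≤ 1) (htρ : t * ‖b‖ ≤ ρ) (ht : t = 1 ∨ t * ‖b‖ = ρ) :
    ‖s • a - t • b‖ ≤ ‖a - b‖ := by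
  have h1 := inner_retract_nonpos (y := t • b) hs1 hs
    (by rwa [norm_smul, Real.norm_of_nonneg ht0])
  have h2 := inner_retract_nonpos (y := s • a) ht1 ht
    (by rwa [norm_smul, Real.norm_of_nonneg hs0])
  have h3 : ‖s • a - t • b‖ ^ 2 ≤ inner ℝ (a - b) (s • a - t • b) := by
    rw [← real_inner_self_eq_norm_sq]
    simp only [inner_sub_left, inner_sub_right] at h1 h2 ⊢
    linarith
  have h4 := h3.trans (real_inner_le_norm _ _)
  by_contra! hlt
  nlinarith [norm_nonneg (a - b)]

/-- Shrinking `a` radially to its projection `s • a` on the closed ball of radius `1 - e` changes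
`u` by at most `ω̃ e`. -/
theorem radial_estimate {E : Type*} [NormedAddCommGroup E] [NormedSpace ℝ E] {ω : ℝ → ℝ}
    (hω : DiniMajorant ω) {u : E → ℝ} (hu : ∀ z ∈ Metric.ball (0 : E) 1, DifferentiableAt ℝ u z)
    (hgrad : ∀ z ∈ Metric.ball (0 : E) 1, ‖fderiv ℝ u z‖ ≤ ω (1 - ‖z‖) / (1 - ‖z‖))
    {a : E} (ha : ‖a‖ < 1) {e s : ℝ} (he : 0 ≤ e) (hs0 : 0 ≤ s) (hs1 : s ≤ 1)
    (hs : s = 1 ∨ s * ‖a‖ = 1 - e) :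
    |u a - u (s • a)| ≤ omegaTilde ω e := by
  rcases hs with rfl | hs
  · have := (mul_nonneg (hω.div_nonneg he) he).trans (hω.mul_le_omegaTilde he)
    simpa using this
  have hmem : ∀ τ ∈ Set.Icc s 1, τ * ‖a‖ < 1 ∧ ‖τ • a‖ = τ * ‖a‖ := fun τ hτ =>
    ⟨(mul_le_of_le_one_left (norm_nonneg a) hτ.2).trans_lt ha, by
      rw [norm_smul, Real.norm_of_nonneg (hs0.trans hτ.1)]⟩
  have hball : ∀ τ ∈ Set.Icc s 1, τ • a ∈ Metric.ball (0 : E) 1 := fun τ hτ => by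
    rw [mem_ball_zero_iff, (hmem τ hτ).2]
    exact (hmem τ hτ).1
  have hder : ∀ τ ∈ Set.Icc s 1,
      HasDerivAt (fun τ : ℝ => u (τ • a)) (fderiv ℝ u (τ • a) a) τ := fun τ hτ => by
    have h1 : HasDerivAt (fun τ : ℝ => τ • a) a τ := by
      simpa using (hasDerivAt_id τ).smul_const a
    exact (hu _ (hball τ hτ)).hasFDerivAt.comp_hasDerivAt τ h1
  have hcont : ContinuousOn (fun τ : ℝ => ‖a‖ * (ω (1 - ‖a‖ * τ) / (1 - ‖a‖ * τ)))
      (Set.Icc s 1) := by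
    refine continuousOn_const.mul
      (hω.continuousOn_div.comp (f := fun τ : ℝ => 1 - ‖a‖ * τ) (by fun_prop) fun τ hτ => ?_)
    have := (hmem τ hτ).1
    simp only [Set.mem_Ioi]
    linarith [mul_comm τ ‖a‖]
  have key := norm_sub_le_integral_of_norm_deriv_le_of_le (f := fun τ : ℝ => u (τ • a))
    (B := fun τ : ℝ => ‖a‖ * (ω (1 - ‖a‖ * τ) / (1 - ‖a‖ * τ))) hs1
    (fun τ hτ => (hder τ hτ).continuousAt.continuousWithinAt)
    (fun τ hτ => (hder τ (Set.Ioo_subset_Icc_self hτ)).differentiableAt.differentiableWithinAt)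
    (Filter.Eventually.of_forall fun τ hτ => by
      have hτ' := Set.Ioo_subset_Icc_self hτ
      rw [(hder τ hτ').deriv]
      refine ((fderiv ℝ u (τ • a)).le_opNorm a).trans ?_
      have := hgrad _ (hball τ hτ')
      rw [(hmem τ hτ').2, mul_comm τ] at this
      rw [mul_comm]
      exact mul_le_mul_of_nonneg_left this (norm_nonneg a))
    (hcont.intervalIntegrable_of_Icc hs1)
  rw [intervalIntegral.integral_const_mul,
    intervalIntegral.mul_integral_comp_sub_mul (f := fun x => ω x / x)] at key
  have h5 : 1 - ‖a‖ * s = e := by linarith [mul_comm s ‖a‖]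
  have h6 : 1 - ‖a‖ * 1 ≤ e := by
    rw [← h5]
    linarith [mul_le_mul_of_nonneg_left hs1 (norm_nonneg a)]
  rw [h5, intervalIntegral.integral_of_le h6] at key
  simp only [one_smul, Real.norm_eq_abs] at key
  exact key.trans (hω.setIntegral_le (by linarith) le_rfl)

theorem gradient_bound_implies_lipschitz_tilde
    (n : ℕ) (hn : 1 ≤ n) (ω : ℝ → ℝ) (hω : DiniMajorant ω)
    (u : EuclideanSpace ℂ (Fin n) → ℝ)
    (hu : ContDiffOn ℝ 1 u (Metric.ball 0 1))
    (hgrad : ∀ z ∈ Metric.ball (0 : EuclideanSpace ℂ (Fin n)) 1,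
      ‖fderiv ℝ u z‖ ≤ ω (1 - ‖z‖) / (1 - ‖z‖)) :
    ∀ a ∈ Metric.ball (0 : EuclideanSpace ℂ (Fin n)) 1,
      ∀ b ∈ Metric.ball (0 : EuclideanSpace ℂ (Fin n)) 1,
        |u a - u b| ≤ 3 * omegaTilde ω ‖a - b‖ := by
  intro a ha b hb
  rcases eq_or_ne a b with rfl | hab
  · simp [omegaTilde]
  have hdiff : ∀ z ∈ Metric.ball (0 : EuclideanSpace ℂ (Fin n)) 1, DifferentiableAt ℝ u z :=
    fun z hz => (hu.differentiableOn one_ne_zero).differentiableAt (Metric.isOpen_ball.mem_nhds hz)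
  have hd : 0 < ‖a - b‖ := norm_pos_iff.2 (sub_ne_zero.2 hab)
  obtain ⟨e, he⟩ : ∃ e, e = min ‖a - b‖ 1 := ⟨_, rfl⟩
  have he0 : 0 < e := he ▸ lt_min hd one_pos
  have hed : e ≤ ‖a - b‖ := he ▸ min_le_left _ _
  have he1 : e ≤ 1 := he ▸ min_le_right _ _
  obtain ⟨s, hs0, hs1, hsρ, hs⟩ := exists_retract a (sub_nonneg.2 he1)
  obtain ⟨t, ht0, ht1, htρ, ht⟩ := exists_retract b (sub_nonneg.2 he1)
  have ha' := radial_estimate hω hdiff hgrad (mem_ball_zero_iff.1 ha) he0.le hs0 hs1 hs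
  have hb' := radial_estimate hω hdiff hgrad (mem_ball_zero_iff.1 hb) he0.le ht0 ht1 ht
  have hsa : ‖s • a‖ ≤ 1 - e := by rwa [norm_smul, Real.norm_of_nonneg hs0]
  have htb : ‖t • b‖ ≤ 1 - e := by rwa [norm_smul, Real.norm_of_nonneg ht0]
  have hproj : ‖s • a - t • b‖ ≤ e := by
    rcases min_choice ‖a - b‖ 1 with h | h
    · rw [he, h]
      let : InnerProductSpace ℝ (EuclideanSpace ℂ (Fin n)) :=
        InnerProductSpace.rclikeToReal ℂ (EuclideanSpace ℂ (Fin n))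
      exact norm_retract_sub_le hs0 hs1 hsρ hs ht0 ht1 htρ ht
    -- If `e = 1`, the ball of radius `1 - e` is the origin, so both projections vanish.
    · have h1 : e = 1 := he.trans h
      linarith [norm_sub_le (s • a) (t • b)]
  have hmid : |u (s • a) - u (t • b)| ≤ omegaTilde ω e := by
    have h := (convex_closedBall (0 : EuclideanSpace ℂ (Fin n)) (1 - e)
      ).norm_image_sub_le_of_norm_fderiv_le (𝕜 := ℝ) (f := u) (C := ω e / e)
      (x := t • b) (y := s • a)
      (fun z hz => hdiff z (by
        rw [mem_closedBall_zero_iff] at hz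
        rw [mem_ball_zero_iff]
        linarith))
      (fun z hz => by
        rw [mem_closedBall_zero_iff] at hz
        refine (hgrad z (by rw [mem_ball_zero_iff]; linarith)).trans ?_
        exact hω.1.2.2.2 (Set.mem_Ioi.2 he0) (Set.mem_Ioi.2 (by linarith)) (by linarith))
      (mem_closedBall_zero_iff.2 htb) (mem_closedBall_zero_iff.2 hsa)
    exact (h.trans (mul_le_mul_of_nonneg_left hproj (hω.div_nonneg he0.le))).trans
      (hω.mul_le_omegaTilde he0.le)
  have hmono : omegaTilde ω e ≤ omegaTilde ω ‖a - b‖ := hω.setIntegral_le le_rfl hed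
  rw [abs_le] at *
  constructor <;> linarith [ha'.1, ha'.2, hb'.1, hb'.2, hmid.1, hmid.2]
end

section
/- Let n ≥ 1, let X be a complex Banach space that is uniformly c-convex with modulus Ω, where Ω is a fast majorant, and let α ∈ (0,1]. If f : 𝔹ⁿ → X is holomorphic and the real-valued function z ↦ ‖f(z)‖ belongs to Λ_α(𝔹ⁿ, ℝ), then f ∈ Lip(ω_α, 𝔹ⁿ, X) where ω_α(t) = Ω(t^α); that is, there is a constant C such that ‖f(a) − f(b)‖ ≤ C·Ω(‖a − b‖^α) for all a, b ∈ 𝔹ⁿ. -/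
/-!
The proof is a gradient estimate of Hardy–Littlewood type followed by integration along a path.

*Gradient estimate.* Let `r ≤ 1 - ‖z‖` and `‖v‖ = r / 2`. Averaging `w ↦ f (z + w • v)` over the
unit circle against the nonnegative kernel `1 + Re (conj lam * w)`, `|lam| ≤ 1`, which has mean `1`,
reproduces `f z + (lam / 2) • f'(z) v` (`norm_value_add_half_deriv_le`). Since `‖f‖` is Hölder, this
vector has norm at most `‖f z‖ + c * r ^ α`, and uniform c-convexity, rescaled to `‖f z‖`
(`ucc_scaled`), turns this into `‖f'(z)‖ ≤ K * Ω (r ^ α) / r` (`norm_fderiv_le_of_holder_norm`).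

*Integration.* For `d = ‖a - b‖` small, join `a` to `b` through `(1 - d) a` and `(1 - d) b`. On the
middle segment the distance to the sphere is at least `d`, so the mean value inequality gives
`K * Ω (d ^ α)`. On the radial segments the gradient estimate at `(1 - t) a` holds with `r = t`, and
the substitution `s = t ^ α` bounds the increment by `(K / α) ∫₀^{d ^ α} Ω s / s ds`
(`radial_estimate`), which is controlled because `Ω` is fast. For `d` bounded below the
boundedness of `f` suffices.
-/

open Metric Set Filter

/-- A fast majorant: a majorant with `∫₀^δ ω t / t dt ≤ C₀ · ω δ` for small `δ`. -/
def FastMajorant (ω : ℝ → ℝ) : Prop :=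
  Majorant ω ∧ ∃ C₀ δ₀ : ℝ, 0 < δ₀ ∧
    MeasureTheory.IntegrableOn (fun t => ω t / t) (Set.Ioc 0 δ₀) ∧
    ∀ δ : ℝ, 0 < δ → δ < δ₀ → (∫ t in Set.Ioc 0 δ, ω t / t) ≤ C₀ * ω δ

/-- A first-order consequence of the maximum principle: `‖g 0‖` and `‖g' 0‖` are controlled jointly,
because `g 0 + (lam / 2) • g' 0` is an average of `g` over the unit circle against the kernel
`1 + Re (conj lam * w)`, which is nonnegative and has mean `1`. -/
lemma norm_value_add_half_deriv_le {E : Type*} [NormedAddCommGroup E] [NormedSpace ℂ E]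
    [CompleteSpace E] {g : ℂ → E} {S : ℝ} (hg : DiffContOnCl ℂ g (ball 0 1))
    (hS : ∀ w : ℂ, ‖w‖ = 1 → ‖g w‖ ≤ S) {lam : ℂ} (hlam : ‖lam‖ ≤ 1) :
    ‖g 0 + (lam / 2) • deriv g 0‖ ≤ S := by
  have hc : ContinuousOn g (sphere 0 1) :=
    (hg.continuousOn_ball).mono sphere_subset_closedBall
  have hne : ∀ w ∈ sphere (0 : ℂ) 1, w ≠ 0 := fun w hw h0 => by simp [h0] at hw
  have h1 : Real.circleAverage g 0 1 = g 0 := by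
    apply DiffContOnCl.circleAverage; simpa using hg
  have h2 : Real.circleAverage (fun w => w • g w) 0 1 = 0 := by
    rw [DiffContOnCl.circleAverage]
    · simp
    · have : DiffContOnCl ℂ (fun w : ℂ => w) (ball 0 1) := differentiable_id.diffContOnCl
      simpa using this.smul hg
  have h3 : Real.circleAverage (fun w => w⁻¹ • g w) 0 1 = deriv g 0 := by
    rw [Real.circleAverage_eq_circleIntegral one_ne_zero]
    have := hg.circleIntegral_one_div_sub_center_pow_smul one_pos 1
    simp only [iteratedDeriv_one, sub_zero, Nat.factorial_one, Nat.cast_one, div_one] at this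
    have h4 : ∀ z : ℂ, (z - 0)⁻¹ • z⁻¹ • g z = (1 / z ^ (1 + 1)) • g z := by
      intro z; rw [smul_smul]; congr 1; simp [pow_two]
    simp only [h4, this, smul_smul]
    rw [inv_mul_cancel₀ (by simp [Real.pi_ne_zero]), one_smul]
  have hi1 : CircleIntegrable g 0 1 := hc.circleIntegrable zero_le_one
  have hi2 : CircleIntegrable (fun w => ((starRingEnd ℂ lam) / 2) • w • g w) 0 1 :=
    ContinuousOn.circleIntegrable zero_le_one
      ((continuousOn_id.smul hc).const_smul ((starRingEnd ℂ lam) / 2))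
  have hi3 : CircleIntegrable (fun w => (lam / 2) • w⁻¹ • g w) 0 1 :=
    ContinuousOn.circleIntegrable zero_le_one
      (((continuousOn_id.inv₀ hne).smul hc).const_smul (lam / 2))
  have hsum : Real.circleAverage (fun w => (g w + ((starRingEnd ℂ lam) / 2) • w • g w)
      + (lam / 2) • w⁻¹ • g w) 0 1 = g 0 + (lam / 2) • deriv g 0 := by
    have hi12 : CircleIntegrable (fun w => g w + ((starRingEnd ℂ lam) / 2) • w • g w) 0 1 :=
      hi1.add hi2
    rw [Real.circleAverage_fun_add hi12 hi3, Real.circleAverage_fun_add hi1 hi2,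
      Real.circleAverage_fun_smul, Real.circleAverage_fun_smul, h1, h2, h3]
    simp
  have hB : Real.circleAverage (fun w => S * (1 + (starRingEnd ℂ lam * w).re)) 0 1 = S := by
    have hd : Differentiable ℂ (fun w : ℂ => (S : ℂ) * (1 + starRingEnd ℂ lam * w)) := by fun_prop
    have ha : Real.circleAverage (fun w : ℂ => (S : ℂ) * (1 + starRingEnd ℂ lam * w)) 0 1 = S := by
      rw [DiffContOnCl.circleAverage hd.diffContOnCl]; simp
    have hb := Complex.reCLM.circleAverage_comp_comm
      (hd.continuous.continuousOn.circleIntegrable (c := 0) zero_le_one)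
    rw [ha] at hb
    simpa [Function.comp_def] using hb
  rw [← hsum, ← hB, Real.circleAverage_def, Real.circleAverage_def, norm_smul, smul_eq_mul,
    Real.norm_of_nonneg (by positivity)]
  refine mul_le_mul_of_nonneg_left ?_ (by positivity)
  refine intervalIntegral.norm_integral_le_of_norm_le Real.two_pi_pos.le ?_
    (Continuous.intervalIntegrable (by fun_prop) _ _)
  refine MeasureTheory.ae_of_all _ fun θ _ => ?_
  have hw : ‖circleMap 0 1 θ‖ = 1 := by simp
  generalize circleMap 0 1 θ = w at hw
  -- on the unit circle `w⁻¹ = conj w`, so the kernel is `1 + Re (conj lam * w) ≥ 0`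
  have hinv : w⁻¹ = starRingEnd ℂ w := by
    rw [Complex.inv_def, Complex.normSq_eq_norm_sq, hw]; simp
  have hk : (g w + ((starRingEnd ℂ lam) / 2) • w • g w) + (lam / 2) • w⁻¹ • g w
      = ((1 + (starRingEnd ℂ lam * w).re : ℝ) : ℂ) • g w := by
    have h5 : ((1 + (starRingEnd ℂ lam * w).re : ℝ) : ℂ)
        = 1 + starRingEnd ℂ lam / 2 * w + lam / 2 * w⁻¹ := by
      push_cast
      rw [Complex.re_eq_add_conj, hinv]; simp; ring
    rw [h5, add_smul, add_smul, one_smul, mul_smul, mul_smul]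
  have hpos : 0 ≤ 1 + (starRingEnd ℂ lam * w).re := by
    have := Complex.abs_re_le_norm (starRingEnd ℂ lam * w)
    rw [norm_mul, hw, Complex.norm_conj, mul_one] at this
    linarith [neg_abs_le (starRingEnd ℂ lam * w).re]
  rw [hk, norm_smul, Complex.norm_real, Real.norm_of_nonneg hpos, mul_comm]
  exact mul_le_mul_of_nonneg_right (hS w hw) hpos

section

variable {E X : Type*} [NormedAddCommGroup E] [NormedSpace ℂ E]
    [NormedAddCommGroup X] [NormedSpace ℂ X]

/-- Uniform c-convexity at a point `x` of norm at most `M` rather than `1`. Rescaling gives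
`‖y‖ ≤ ‖x‖ * Ω (c * s / ‖x‖)`, and `m ↦ m * Ω (c * s / m)` is nondecreasing since `Ω t / t` is
nonincreasing, so `‖x‖` may be replaced by `M ≥ c`. The summand `c / Ω 1` covers `x = 0`, where
`‖y‖ ≤ c * s` is compared with `Ω s ≥ s * Ω 1`. -/
lemma ucc_scaled {Ω : ℝ → ℝ} (hΩ : Majorant Ω)
    (hΩpos : ∀ δ : ℝ, 0 < δ → 0 < Ω δ)
    (hucc : ∀ x y : X, ‖x‖ = 1 → ∀ δ : ℝ, 0 < δ →
      (∀ lam : ℂ, ‖lam‖ ≤ 1 → ‖x + lam • y‖ ≤ 1 + δ) → ‖y‖ ≤ Ω δ)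
    {c M s : ℝ} (hc : 0 < c) (hcM : c ≤ M) (hs : 0 < s) (hs1 : s ≤ 1) {x y : X} (hx : ‖x‖ ≤ M)
    (h : ∀ lam : ℂ, ‖lam‖ ≤ 1 → ‖x + lam • y‖ ≤ ‖x‖ + c * s) :
    ‖y‖ ≤ (M + c / Ω 1) * Ω s := by
  obtain ⟨-, hmono, -, hanti⟩ := hΩ
  have hM : 0 < M := hc.trans_le hcM
  have hΩ1 := hΩpos 1 one_pos
  have hΩs := hΩpos s hs
  rcases eq_or_ne x 0 with rfl | hx0
  · have h1 : ‖y‖ ≤ c * s := by simpa using h 1 (by simp)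
    have h2 : Ω 1 / 1 ≤ Ω s / s := hanti (mem_Ioi.2 hs) (mem_Ioi.2 one_pos) hs1
    rw [div_one, le_div_iff₀ hs] at h2
    have h3 : c * s ≤ c / Ω 1 * Ω s := by
      rw [div_mul_eq_mul_div, le_div_iff₀ hΩ1, mul_assoc, mul_comm s]
      exact mul_le_mul_of_nonneg_left h2 hc.le
    nlinarith [mul_pos hM hΩs]
  · set m := ‖x‖ with hm
    have hmpos : 0 < m := norm_pos_iff.2 hx0
    have hmC : (m : ℂ) ≠ 0 := by exact_mod_cast hmpos.ne'
    have hnm : ‖(m : ℂ)⁻¹‖ = m⁻¹ := by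
      rw [norm_inv, Complex.norm_real, Real.norm_of_nonneg hmpos.le]
    have hy := hucc ((m : ℂ)⁻¹ • x) ((m : ℂ)⁻¹ • y)
      (by rw [norm_smul, hnm, ← hm, inv_mul_cancel₀ hmpos.ne']) (c * s / m) (by positivity)
      (fun lam hlam => by
        rw [smul_comm, ← smul_add, norm_smul, hnm]
        calc m⁻¹ * ‖x + lam • y‖ ≤ m⁻¹ * (m + c * s) := by gcongr; exact h lam hlam
          _ = 1 + c * s / m := by field_simp)
    rw [norm_smul, hnm, inv_mul_le_iff₀ hmpos] at hy
    have h1 : Ω (c * s / m) / (c * s / m) ≤ Ω (c * s / M) / (c * s / M) :=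
      hanti (show 0 < c * s / M by positivity) (show 0 < c * s / m by positivity) (by gcongr)
    have h2 : m * Ω (c * s / m) ≤ M * Ω (c * s / M) := by
      have h3 := mul_le_mul_of_nonneg_left h1 (show 0 ≤ c * s by positivity)
      have e : ∀ t : ℝ, 0 < t → c * s * (Ω (c * s / t) / (c * s / t)) = t * Ω (c * s / t) := by
        intro t ht; field_simp
      rwa [e m hmpos, e M hM] at h3
    have h4 : Ω (c * s / M) ≤ Ω s := by
      refine hmono (show 0 ≤ c * s / M by positivity) hs.le ?_
      rw [div_le_iff₀ hM]; nlinarith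
    have h5 : M * Ω (c * s / M) ≤ M * Ω s := by gcongr
    have h6 : 0 ≤ c / Ω 1 * Ω s := by positivity
    nlinarith

/-- The Hardy–Littlewood type gradient estimate. The radius `r` may be any number up to the distance
from `z` to the unit sphere. -/
lemma norm_fderiv_le_of_holder_norm [CompleteSpace X] {Ω : ℝ → ℝ} (hΩ : Majorant Ω)
    (hΩpos : ∀ δ : ℝ, 0 < δ → 0 < Ω δ)
    (hucc : ∀ x y : X, ‖x‖ = 1 → ∀ δ : ℝ, 0 < δ →
      (∀ lam : ℂ, ‖lam‖ ≤ 1 → ‖x + lam • y‖ ≤ 1 + δ) → ‖y‖ ≤ Ω δ)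
    {α : ℝ} (hα0 : 0 < α) {f : E → X} (hf : DifferentiableOn ℂ f (ball 0 1)) {c M : ℝ}
    (hc : 0 < c) (hcM : c ≤ M) (hM : ∀ z ∈ ball (0 : E) 1, ‖f z‖ ≤ M)
    (hΛ : ∀ z ∈ ball (0 : E) 1, ∀ w ∈ ball (0 : E) 1, |‖f z‖ - ‖f w‖| ≤ c * ‖z - w‖ ^ α)
    {z : E} {r : ℝ} (hr : 0 < r) (hrz : r ≤ 1 - ‖z‖) :
    ‖fderiv ℂ f z‖ ≤ 4 * (M + c / Ω 1) * (Ω (r ^ α) / r) := by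
  have hr1 : r ≤ 1 := by linarith [norm_nonneg z]
  have hz : z ∈ ball (0 : E) 1 := by rw [mem_ball_zero_iff]; linarith
  have hs : 0 < r ^ α := Real.rpow_pos_of_pos hr α
  have hs1 : r ^ α ≤ 1 := Real.rpow_le_one hr.le hr1 hα0.le
  have hΩ1 := hΩpos 1 one_pos
  have hΩs := hΩpos _ hs
  have hMpos : 0 < M := hc.trans_le hcM
  have hfz : HasFDerivAt f (fderiv ℂ f z) z :=
    (hf.differentiableAt (isOpen_ball.mem_nhds hz)).hasFDerivAt
  -- `‖v‖ = r / 2` rather than `r` keeps the closed unit disc inside the domain of the slice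
  have key : ∀ v : E, ‖v‖ = r / 2 →
      ‖fderiv ℂ f z v‖ ≤ 2 * ((M + c / Ω 1) * Ω (r ^ α)) := by
    intro v hv
    have hmem : ∀ w ∈ ball (0 : ℂ) 2, z + w • v ∈ ball (0 : E) 1 := by
      intro w hw
      rw [mem_ball_zero_iff] at hw ⊢
      calc ‖z + w • v‖ ≤ ‖z‖ + ‖w‖ * ‖v‖ := (norm_add_le _ _).trans (by rw [norm_smul])
        _ < 1 := by rw [hv]; nlinarith
    have hg : DifferentiableOn ℂ (fun w : ℂ => f (z + w • v)) (ball 0 2) :=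
      hf.comp (by fun_prop) hmem
    have hgc : DiffContOnCl ℂ (fun w : ℂ => f (z + w • v)) (ball 0 1) :=
      hg.diffContOnCl_ball (closedBall_subset_ball (by norm_num))
    have hd : HasDerivAt (fun w : ℂ => f (z + w • v)) (fderiv ℂ f z v) 0 := by
      have h1 : HasDerivAt (fun w : ℂ => z + w • v) v 0 := by
        simpa using ((hasDerivAt_id (0 : ℂ)).smul_const v).const_add z
      have h2 : HasFDerivAt f (fderiv ℂ f z) (z + (0 : ℂ) • v) := by simpa using hfz
      exact h2.comp_hasDerivAt 0 h1
    have hS : ∀ w : ℂ, ‖w‖ = 1 → ‖f (z + w • v)‖ ≤ ‖f z‖ + c * r ^ α := by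
      intro w hw
      have h1 := hΛ (z + w • v) (hmem w (by simp [hw])) z hz
      rw [add_sub_cancel_left, norm_smul, hw, one_mul, hv] at h1
      have h2 : (r / 2) ^ α ≤ r ^ α := Real.rpow_le_rpow (by positivity) (by linarith) hα0.le
      have h3 := mul_le_mul_of_nonneg_left h2 hc.le
      linarith [le_abs_self (‖f (z + w • v)‖ - ‖f z‖)]
    have hy := ucc_scaled hΩ hΩpos hucc hc hcM hs hs1 (x := f z)
      (y := (1 / 2 : ℂ) • fderiv ℂ f z v) (hM z hz) (fun lam hlam => by
        have := norm_value_add_half_deriv_le hgc hS hlam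
        rw [hd.deriv] at this
        simpa [smul_smul, div_eq_mul_inv] using this)
    rw [norm_smul] at hy
    norm_num at hy ⊢
    linarith
  refine ContinuousLinearMap.opNorm_le_bound _ (by positivity) fun v => ?_
  rcases eq_or_ne v 0 with rfl | hv
  · simp
  have hvpos : 0 < ‖v‖ := norm_pos_iff.2 hv
  have h := key (((r / 2 / ‖v‖ : ℝ) : ℂ) • v) (by
    rw [norm_smul, Complex.norm_real, Real.norm_of_nonneg (by positivity)]; field_simp)
  rw [map_smul, norm_smul, Complex.norm_real, Real.norm_of_nonneg (by positivity)] at h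
  have e : 4 * (M + c / Ω 1) * (Ω (r ^ α) / r) * ‖v‖
      = (2 * ((M + c / Ω 1) * Ω (r ^ α))) / (r / 2 / ‖v‖) := by
    field_simp; norm_num
  rw [e, le_div_iff₀ (by positivity), mul_comm]
  exact h

/-- Increment of `f` along the radial segment from `a` to `(1 - d) a`, obtained by integrating the
gradient estimate with `r = t` at the point `(1 - t) a` and substituting `s = t ^ α`. -/
lemma radial_estimate_s9 {Ω : ℝ → ℝ} (hΩ : Majorant Ω) (hΩpos : ∀ δ : ℝ, 0 < δ → 0 < Ω δ)
    {δ₀ : ℝ} (hint : MeasureTheory.IntegrableOn (fun t => Ω t / t) (Ioc 0 δ₀))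
    {α : ℝ} (hα0 : 0 < α) {f : E → X} (hf : DifferentiableOn ℂ f (ball 0 1)) {K : ℝ}
    (hK : 0 ≤ K)
    (hderiv : ∀ (z : E) (r : ℝ), 0 < r → r ≤ 1 - ‖z‖ → ‖fderiv ℂ f z‖ ≤ K * (Ω (r ^ α) / r))
    {a : E} (ha : a ∈ ball (0 : E) 1) {d : ℝ} (hd : 0 < d) (hd1 : d ≤ 1) (hdδ : d ^ α < δ₀) :
    ‖f (((1 - d : ℝ) : ℂ) • a) - f a‖ ≤ K / α * ∫ t in Ioc 0 (d ^ α), Ω t / t := by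
  have ha1 : ‖a‖ < 1 := by simpa using ha
  set h : ℝ → X := fun t => f (((1 - t : ℝ) : ℂ) • a) with hh
  set G : ℝ → ℝ := fun s => ∫ t in (0 : ℝ)..s, Ω t / t with hG
  have hmem : ∀ t ∈ Icc (0 : ℝ) 1, ((1 - t : ℝ) : ℂ) • a ∈ ball (0 : E) 1 := by
    intro t ht
    rw [mem_ball_zero_iff, norm_smul, Complex.norm_real, Real.norm_of_nonneg (by linarith [ht.2])]
    nlinarith [ht.1, norm_nonneg a]
  have hh' : ∀ t ∈ Icc (0 : ℝ) 1,
      HasDerivAt h (fderiv ℂ f (((1 - t : ℝ) : ℂ) • a) (-a)) t := by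
    intro t ht
    have h1 : HasDerivAt (fun t : ℝ => ((1 - t : ℝ) : ℂ) • a) (-a) t := by
      have h2 : HasDerivAt (fun t : ℝ => ((1 - t : ℝ) : ℂ)) (((-1 : ℝ)) : ℂ) t :=
        ((hasDerivAt_id t).const_sub 1).ofReal_comp
      simpa using h2.smul_const a
    have h3 := (hf.differentiableAt (isOpen_ball.mem_nhds (hmem t ht))).hasFDerivAt
    exact (h3.restrictScalars ℝ).comp_hasDerivAt t h1
  have hbound : ∀ t ∈ Ioc (0 : ℝ) 1,
      ‖fderiv ℂ f (((1 - t : ℝ) : ℂ) • a) (-a)‖ ≤ K * (Ω (t ^ α) / t) := by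
    intro t ht
    have h1 := hderiv (((1 - t : ℝ) : ℂ) • a) t ht.1 (by
      rw [norm_smul, Complex.norm_real, Real.norm_of_nonneg (by linarith [ht.2])]
      nlinarith [ht.1, ht.2, norm_nonneg a])
    have h2 := (fderiv ℂ f (((1 - t : ℝ) : ℂ) • a)).le_opNorm (-a)
    rw [norm_neg] at h2
    nlinarith [norm_nonneg (fderiv ℂ f (((1 - t : ℝ) : ℂ) • a))]
  have hG' : ∀ s, 0 < s → s ≤ d ^ α → HasDerivAt G (Ω s / s) s := by
    intro s hs hsd
    have hcont : ContinuousOn (fun t => Ω t / t) (Ioi 0) :=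
      (hΩ.1.mono Ioi_subset_Ici_self).div continuousOn_id (fun x hx => ne_of_gt hx)
    refine intervalIntegral.integral_hasDerivAt_right ?_ ?_
      (hcont.continuousAt (Ioi_mem_nhds hs))
    · rw [intervalIntegrable_iff_integrableOn_Ioc_of_le hs.le]
      exact hint.mono_set (Ioc_subset_Ioc_right (hsd.trans hdδ.le))
    · exact hcont.stronglyMeasurableAtFilter isOpen_Ioi s hs
  have hGnn : ∀ s, 0 ≤ s → 0 ≤ G s := by
    intro s hs
    simp only [hG]
    rw [intervalIntegral.integral_of_le hs]
    exact MeasureTheory.setIntegral_nonneg measurableSet_Ioc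
      fun t ht => (div_pos (hΩpos t ht.1) ht.1).le
  have hB' : ∀ t ∈ Ioc (0 : ℝ) d,
      HasDerivAt (fun t => K / α * G (t ^ α)) (K * (Ω (t ^ α) / t)) t := by
    intro t ht
    have htα : 0 < t ^ α := Real.rpow_pos_of_pos ht.1 α
    have h1 := (hG' (t ^ α) htα (Real.rpow_le_rpow ht.1.le ht.2 hα0.le)).comp t
      (Real.hasDerivAt_rpow_const (p := α) (Or.inl ht.1.ne'))
    refine (h1.const_mul (K / α)).congr_deriv ?_
    rw [Real.rpow_sub_one ht.1.ne']
    have := ht.1.ne'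
    field_simp
  -- the comparison function need not be differentiable at `0`, so stop at `ε` and let `ε → 0`
  have hε : ∀ ε ∈ Ioo (0 : ℝ) d, ‖h d - h ε‖ ≤ K / α * G (d ^ α) := by
    intro ε hε
    have hsub : ∀ t ∈ Icc ε d, t ∈ Ioc (0 : ℝ) d := fun t ht => ⟨hε.1.trans_le ht.1, ht.2⟩
    have hsub1 : ∀ t ∈ Icc ε d, t ∈ Ioc (0 : ℝ) 1 := fun t ht =>
      ⟨hε.1.trans_le ht.1, ht.2.trans hd1⟩
    have h1 : ∀ t ∈ Icc ε d, HasDerivAt (fun t => h t - h ε)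
        (fderiv ℂ f (((1 - t : ℝ) : ℂ) • a) (-a)) t := fun t ht =>
      (hh' t (Ioc_subset_Icc_self (hsub1 t ht))).sub_const _
    refine image_norm_le_of_norm_deriv_right_le_deriv_boundary'
      (f := fun t => h t - h ε) (B := fun t => K / α * G (t ^ α))
      (fun t ht => (h1 t ht).continuousAt.continuousWithinAt)
      (fun t ht => (h1 t (Ico_subset_Icc_self ht)).hasDerivWithinAt) ?_
      (fun t ht => (hB' t (hsub t ht)).continuousAt.continuousWithinAt)
      (fun t ht => (hB' t (hsub t (Ico_subset_Icc_self ht))).hasDerivWithinAt)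
      (fun t ht => hbound t (hsub1 t (Ico_subset_Icc_self ht))) (right_mem_Icc.2 hε.2.le)
    simp only [sub_self, norm_zero]
    have := hGnn (ε ^ α) (Real.rpow_nonneg hε.1.le α)
    positivity
  have hlim : Tendsto (fun ε => ‖h d - h ε‖) (nhdsWithin 0 (Ioi 0)) (nhds ‖h d - h 0‖) := by
    have h1 : ContinuousAt h 0 := (hh' 0 (by simp)).continuousAt
    exact ((h1.tendsto.const_sub (h d)).norm).mono_left nhdsWithin_le_nhds
  have hfin := le_of_tendsto hlim (by
    filter_upwards [Ioo_mem_nhdsGT hd] with ε h2 using hε ε h2)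
  have hG2 : G (d ^ α) = ∫ t in Ioc 0 (d ^ α), Ω t / t :=
    intervalIntegral.integral_of_le (Real.rpow_nonneg hd.le α)
  rw [← hG2]
  simpa [hh] using hfin

end

theorem lipschitz_modulus_implies_lipschitz_fast
    {X : Type*} [NormedAddCommGroup X] [NormedSpace ℂ X] [CompleteSpace X]
    (n : ℕ) (hn : 1 ≤ n)
    (Ω : ℝ → ℝ) (hΩpos : ∀ δ : ℝ, 0 < δ → 0 < Ω δ)
    (hΩfast : FastMajorant Ω)
    (hucc : ∀ x y : X, ‖x‖ = 1 → ∀ δ : ℝ, 0 < δ →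
      (∀ lam : ℂ, ‖lam‖ ≤ 1 → ‖x + lam • y‖ ≤ 1 + δ) → ‖y‖ ≤ Ω δ)
    (α : ℝ) (hα0 : 0 < α) (hα1 : α ≤ 1)
    (f : EuclideanSpace ℂ (Fin n) → X)
    (hf : DifferentiableOn ℂ f (Metric.ball 0 1))
    (hΛ : ∃ c : ℝ, ∀ z ∈ Metric.ball (0 : EuclideanSpace ℂ (Fin n)) 1,
      ∀ w ∈ Metric.ball (0 : EuclideanSpace ℂ (Fin n)) 1,
        |‖f z‖ - ‖f w‖| ≤ c * ‖z - w‖ ^ α) :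
    ∃ C : ℝ, ∀ a ∈ Metric.ball (0 : EuclideanSpace ℂ (Fin n)) 1,
      ∀ b ∈ Metric.ball (0 : EuclideanSpace ℂ (Fin n)) 1,
        ‖f a - f b‖ ≤ C * Ω (‖a - b‖ ^ α) := by
  obtain ⟨hmaj, C₀, δ₀, hδ₀, hint, hfast⟩ := hΩfast
  obtain ⟨c₀, hΛ₀⟩ := hΛ
  set c : ℝ := max c₀ 1 with hcdef
  have hc : 0 < c := lt_max_of_lt_right one_pos
  have hΛ : ∀ z ∈ ball (0 : EuclideanSpace ℂ (Fin n)) 1,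
      ∀ w ∈ ball (0 : EuclideanSpace ℂ (Fin n)) 1, |‖f z‖ - ‖f w‖| ≤ c * ‖z - w‖ ^ α :=
    fun z hz w hw => (hΛ₀ z hz w hw).trans
      (mul_le_mul_of_nonneg_right (le_max_left _ _) (Real.rpow_nonneg (norm_nonneg _) α))
  set M : ℝ := ‖f 0‖ + c with hMdef
  have hcM : c ≤ M := le_add_of_nonneg_left (norm_nonneg _)
  have hM : ∀ z ∈ ball (0 : EuclideanSpace ℂ (Fin n)) 1, ‖f z‖ ≤ M := by
    intro z hz
    have h1 := hΛ z hz 0 (mem_ball_self one_pos)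
    rw [sub_zero] at h1
    have h2 : ‖z‖ ^ α ≤ 1 :=
      Real.rpow_le_one (norm_nonneg z) (by simpa using (mem_ball_zero_iff.1 hz).le) hα0.le
    have h3 := mul_le_mul_of_nonneg_left h2 hc.le
    linarith [le_abs_self (‖f z‖ - ‖f 0‖)]
  have hMpos : 0 < M := hc.trans_le hcM
  have hΩ1 := hΩpos 1 one_pos
  set K : ℝ := 4 * (M + c / Ω 1) with hKdef
  have hK : 0 < K := by positivity
  have hderiv : ∀ (z : EuclideanSpace ℂ (Fin n)) (r : ℝ), 0 < r → r ≤ 1 - ‖z‖ →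
      ‖fderiv ℂ f z‖ ≤ K * (Ω (r ^ α) / r) := fun z r hr hrz =>
    norm_fderiv_le_of_holder_norm hmaj hΩpos hucc hα0 hf hc hcM hM hΛ hr hrz
  -- threshold below which `d ≤ 1` and the fast condition applies at `d ^ α`
  set d₁ : ℝ := min 1 ((δ₀ / 2) ^ (1 / α)) with hd₁def
  have hd₁ : 0 < d₁ := lt_min one_pos (Real.rpow_pos_of_pos (by linarith) _)
  have hd₁δ : d₁ ^ α < δ₀ := by
    calc d₁ ^ α ≤ ((δ₀ / 2) ^ (1 / α)) ^ α :=
          Real.rpow_le_rpow hd₁.le (min_le_right _ _) hα0.le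
      _ = δ₀ / 2 := by
          rw [← Real.rpow_mul (by linarith), one_div_mul_cancel hα0.ne', Real.rpow_one]
      _ < δ₀ := by linarith
  have hΩd₁ : 0 < Ω (d₁ ^ α) := hΩpos _ (Real.rpow_pos_of_pos hd₁ α)
  refine ⟨2 * (K / α * |C₀|) + K + 2 * M / Ω (d₁ ^ α), fun a ha b hb => ?_⟩
  rcases eq_or_ne a b with rfl | hab
  · simp [Real.zero_rpow hα0.ne', hmaj.2.2.1]
  set d : ℝ := ‖a - b‖ with hddef
  have hd : 0 < d := norm_pos_iff.2 (sub_ne_zero.2 hab)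
  have hdα : 0 < d ^ α := Real.rpow_pos_of_pos hd α
  have hΩd : 0 < Ω (d ^ α) := hΩpos _ hdα
  rcases le_total d d₁ with hdd | hdd
  · have hd1 : d ≤ 1 := hdd.trans (min_le_left _ _)
    have hdδ : d ^ α < δ₀ := (Real.rpow_le_rpow hd.le hdd hα0.le).trans_lt hd₁δ
    have hrad : ∀ x ∈ ball (0 : EuclideanSpace ℂ (Fin n)) 1,
        ‖f (((1 - d : ℝ) : ℂ) • x) - f x‖ ≤ K / α * |C₀| * Ω (d ^ α) := by
      intro x hx
      calc _ ≤ K / α * ∫ t in Ioc 0 (d ^ α), Ω t / t :=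
            radial_estimate_s9 hmaj hΩpos hint hα0 hf hK.le hderiv hx hd hd1 hdδ
        _ ≤ K / α * (|C₀| * Ω (d ^ α)) := by
            refine mul_le_mul_of_nonneg_left ((hfast _ hdα hdδ).trans ?_) (by positivity)
            exact mul_le_mul_of_nonneg_right (le_abs_self _) hΩd.le
        _ = _ := by ring
    have hshrink : ∀ x ∈ ball (0 : EuclideanSpace ℂ (Fin n)) 1,
        ((1 - d : ℝ) : ℂ) • x ∈ closedBall (0 : EuclideanSpace ℂ (Fin n)) (1 - d) := by
      intro x hx
      rw [mem_ball_zero_iff] at hx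
      rw [mem_closedBall_zero_iff, norm_smul, Complex.norm_real,
        Real.norm_of_nonneg (by linarith)]
      nlinarith
    have hmid : ‖f (((1 - d : ℝ) : ℂ) • a) - f (((1 - d : ℝ) : ℂ) • b)‖ ≤ K * Ω (d ^ α) := by
      have h1 := (convex_closedBall (0 : EuclideanSpace ℂ (Fin n))
        (1 - d)).norm_image_sub_le_of_norm_fderiv_le (𝕜 := ℂ) (f := f)
        (C := K * (Ω (d ^ α) / d))
        (fun x hx => hf.differentiableAt (isOpen_ball.mem_nhds
          (closedBall_subset_ball (by linarith) hx)))
        (fun x hx => hderiv x d hd (by linarith [mem_closedBall_zero_iff.1 hx]))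
        (hshrink b hb) (hshrink a ha)
      rw [← smul_sub, norm_smul, Complex.norm_real, Real.norm_of_nonneg (by linarith),
        ← hddef] at h1
      refine h1.trans ?_
      rw [show K * (Ω (d ^ α) / d) * ((1 - d) * d) = K * Ω (d ^ α) * (1 - d) by field_simp]
      exact mul_le_of_le_one_right (by positivity) (by linarith)
    have h1 := hrad a ha
    have h2 := hrad b hb
    have h3 : ‖f a - f b‖ ≤ ‖f (((1 - d : ℝ) : ℂ) • a) - f a‖
        + ‖f (((1 - d : ℝ) : ℂ) • a) - f (((1 - d : ℝ) : ℂ) • b)‖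
        + ‖f (((1 - d : ℝ) : ℂ) • b) - f b‖ := by
      rw [norm_sub_rev _ (f a)]
      refine le_trans (le_of_eq ?_) norm_add₃_le
      congr 1; abel
    have h4 : 0 ≤ 2 * M / Ω (d₁ ^ α) * Ω (d ^ α) := by positivity
    nlinarith
  · have h1 : Ω (d₁ ^ α) ≤ Ω (d ^ α) :=
      hmaj.2.1 (mem_Ici.2 (Real.rpow_nonneg hd₁.le α)) (mem_Ici.2 hdα.le)
        (Real.rpow_le_rpow hd₁.le hdd hα0.le)
    have h2 : 2 * M ≤ 2 * M / Ω (d₁ ^ α) * Ω (d ^ α) := by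
      rw [div_mul_eq_mul_div, le_div_iff₀ hΩd₁]
      exact mul_le_mul_of_nonneg_left h1 (by positivity)
    have h3 : 0 ≤ (2 * (K / α * |C₀|) + K) * Ω (d ^ α) := by positivity
    have h4 := norm_sub_le (f a) (f b)
    nlinarith [hM a ha, hM b hb]
end

section
/- Let n ≥ 1, m ≥ 2, and 0 < α ≤ 1. If f : 𝔹ⁿ → ℂᵐ is a holomorphic function such that the real-valued function z ↦ ‖f(z)‖ belongs to Λ_α(𝔹ⁿ, ℝ), then f ∈ Λ_{α/2}(𝔹ⁿ, ℂᵐ); that is, there is a constant C with ‖f(z) − f(w)‖ ≤ C·‖z − w‖^{α/2} for all z, w ∈ 𝔹ⁿ. -/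
/-!
The loss of a factor `2` in the exponent comes from a Schwarz-type inequality. If `g` is a
Hilbert-space-valued holomorphic function with `‖g‖ ≤ R` on the circle of radius `r`, then
`r² ‖g'(0)‖² ≤ R² - ‖g(0)‖²` (`sq_norm_deriv_le_of_norm_le`). On a disc of radius
`r = (1 - ‖z‖) / 2` around `z` in a complex direction, the hypothesis on `‖f‖` allows
`R = ‖f z‖ + c r ^ α`, so `R² - ‖f z‖²` is `O(r ^ α)` because `f` is bounded. Hence
`‖Df(z)‖ = O((1 - ‖z‖) ^ (α / 2 - 1))` (`norm_fderiv_le_of_modulus`), and the Hardy–Littlewood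
lemma (`norm_sub_le_of_norm_fderiv_le`) turns this growth bound into a Hölder bound of exponent
`α / 2` for points at distance less than `1`. For points further apart, boundedness of `f` is
enough.
-/

open Metric Set

/-- A Schwarz-type inequality for Hilbert-space-valued holomorphic functions: the first two terms
of the Parseval inequality `∑ ‖aₖ‖² r²ᵏ ≤ R²`. Writing `g ζ = a₀ + ζ q ζ`, one has on `‖ζ‖ = r`
`‖g‖² = ‖a₀‖² + 2 Re ⟪a₀, ζ q⟫ + r² ‖q‖²` and `‖q‖² ≥ 2 Re ⟪a₁, q⟫ - ‖a₁‖²`, so that the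
holomorphic function `2 ζ ⟪a₀, q⟫ + 2 r² ⟪a₁, q⟫` has bounded real part; its value at `0` is
`2 r² ‖a₁‖²`. -/
lemma sq_norm_deriv_le_of_norm_le {F : Type*} [NormedAddCommGroup F] [InnerProductSpace ℂ F]
    [CompleteSpace F] {g : ℂ → F} {r ρ R : ℝ} (hr : 0 < r) (hrρ : r < ρ)
    (hg : DifferentiableOn ℂ g (ball 0 ρ)) (hR : ∀ ζ : ℂ, ‖ζ‖ = r → ‖g ζ‖ ≤ R) :
    r ^ 2 * ‖deriv g 0‖ ^ 2 ≤ R ^ 2 - ‖g 0‖ ^ 2 := by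
  set a : F := g 0 with ha
  set b : F := deriv g 0 with hb
  set q : ℂ → F := dslope g 0 with hq
  have hqd : DifferentiableOn ℂ q (ball 0 ρ) :=
    (Complex.differentiableOn_dslope (ball_mem_nhds 0 (hr.trans hrρ))).2 hg
  have hgq : ∀ ζ, g ζ = a + ζ • q ζ := fun ζ => by
    have := sub_smul_dslope g 0 ζ
    rw [sub_zero] at this
    rw [hq, this, ha]; abel
  set h : ℂ → ℂ := fun ζ => 2 * ζ * innerSL ℂ a (q ζ) + 2 * r ^ 2 * innerSL ℂ b (q ζ) with hh
  have hhd : DifferentiableOn ℂ h (ball 0 ρ) := by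
    have h1 : DifferentiableOn ℂ (fun ζ => innerSL ℂ a (q ζ)) (ball 0 ρ) :=
      (innerSL ℂ a).differentiable.comp_differentiableOn hqd
    have h2 : DifferentiableOn ℂ (fun ζ => innerSL ℂ b (q ζ)) (ball 0 ρ) :=
      (innerSL ℂ b).differentiable.comp_differentiableOn hqd
    exact ((differentiableOn_id.const_mul 2).mul h1).add (h2.const_mul _)
  have hbd : ∀ ζ : ℂ, ‖ζ‖ = r → (h ζ).re ≤ R ^ 2 - ‖a‖ ^ 2 + r ^ 2 * ‖b‖ ^ 2 := by
    intro ζ hζ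
    have e1 : ‖g ζ‖ ^ 2 = ‖a‖ ^ 2 + 2 * (ζ * inner ℂ a (q ζ)).re + r ^ 2 * ‖q ζ‖ ^ 2 := by
      rw [hgq ζ, norm_add_sq (𝕜 := ℂ), inner_smul_right, norm_smul, hζ]
      simp only [RCLike.re_to_complex]; ring
    have e2 : 0 ≤ ‖b‖ ^ 2 - 2 * (inner ℂ b (q ζ)).re + ‖q ζ‖ ^ 2 := by
      have := norm_sub_sq (𝕜 := ℂ) b (q ζ)
      simp only [RCLike.re_to_complex] at this
      rw [← this]; positivity
    have e3 : ‖g ζ‖ ^ 2 ≤ R ^ 2 := by gcongr; exact hR ζ hζ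
    have e4 : (h ζ).re = 2 * (ζ * inner ℂ a (q ζ)).re + 2 * r ^ 2 * (inner ℂ b (q ζ)).re := by
      have : h ζ = ((2 : ℝ) : ℂ) * (ζ * inner ℂ a (q ζ))
          + ((2 * r ^ 2 : ℝ) : ℂ) * inner ℂ b (q ζ) := by
        simp only [hh, innerSL_apply_apply]; push_cast; ring
      rw [this, Complex.add_re, Complex.re_ofReal_mul, Complex.re_ofReal_mul]
    have e5 := mul_nonneg (sq_nonneg r) e2
    rw [e4]; nlinarith
  have h0 : (h 0).re = 2 * r ^ 2 * ‖b‖ ^ 2 := by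
    have : h 0 = ((2 * r ^ 2 * ‖b‖ ^ 2 : ℝ) : ℂ) := by
      simp only [hh, hq, dslope_same, innerSL_apply_apply, ← hb, inner_self_eq_norm_sq_to_K]
      simp
    rw [this, Complex.ofReal_re]
  -- The maximum principle for the real part of `h` is that for the modulus of `exp ∘ h`.
  have hmax : ‖Complex.exp (h 0)‖ ≤ Real.exp (R ^ 2 - ‖a‖ ^ 2 + r ^ 2 * ‖b‖ ^ 2) := by
    refine Complex.norm_le_of_forall_mem_frontier_norm_le (f := fun ζ => Complex.exp (h ζ))
      (U := ball 0 r) isBounded_ball ?_ ?_ (subset_closure (mem_ball_self hr))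
    · refine DifferentiableOn.diffContOnCl_ball (U := ball 0 ρ) ?_ (closedBall_subset_ball hrρ)
      exact hhd.cexp
    · intro ζ hζ
      rw [frontier_ball _ hr.ne', mem_sphere_zero_iff_norm] at hζ
      rw [Complex.norm_exp]
      exact Real.exp_le_exp.2 (hbd ζ hζ)
  rw [Complex.norm_exp, Real.exp_le_exp, h0] at hmax
  linarith

section HardyLittlewood

variable {E F : Type*} [NormedAddCommGroup E] [NormedSpace ℂ E]
  [NormedAddCommGroup F] [NormedSpace ℂ F]

/-- Integration of the derivative bound along the ray from `t • z` to `z`. -/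
lemma norm_sub_smul_le_of_norm_fderiv_le {f : E → F} {C β : ℝ} (hC : 0 ≤ C)
    (hβ : 0 < β) (hβ1 : β ≤ 1) (hf : DifferentiableOn ℂ f (ball 0 1))
    (hD : ∀ z ∈ ball (0 : E) 1, ‖fderiv ℂ f z‖ ≤ C * (1 - ‖z‖) ^ (β - 1))
    {z : E} (hz : z ∈ ball (0 : E) 1) {d : ℝ} (hd0 : 0 < d) (hd1 : d < 1) :
    ‖f z - f (((1 - d : ℝ) : ℂ) • z)‖ ≤ C / β * d ^ β := by
  have hz1 : ‖z‖ < 1 := by simpa using hz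
  have hpos : ∀ t ∈ Icc (1 - d) 1, 0 < 1 - t * ‖z‖ := fun t ht => by
    nlinarith [norm_nonneg z, ht.1, ht.2]
  have hnorm : ∀ t ∈ Icc (1 - d) 1, ‖(t : ℂ) • z‖ = t * ‖z‖ := fun t ht => by
    rw [norm_smul, Complex.norm_real, Real.norm_of_nonneg (by linarith [ht.1])]
  have hmem : ∀ t ∈ Icc (1 - d) 1, (t : ℂ) • z ∈ ball (0 : E) 1 := fun t ht => by
    rw [mem_ball_zero_iff, hnorm t ht]; linarith [hpos t ht]
  have hder : ∀ t ∈ Icc (1 - d) 1,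
      HasDerivAt (fun t : ℝ => f ((t : ℂ) • z)) (fderiv ℂ f ((t : ℂ) • z) z) t := by
    intro t ht
    have h1 : HasFDerivAt f (fderiv ℂ f ((t : ℂ) • z)) ((t : ℂ) • z) :=
      (hf.differentiableAt (isOpen_ball.mem_nhds (hmem t ht))).hasFDerivAt
    have h2 : HasDerivAt (fun s : ℂ => s • z) z (t : ℂ) := by
      simpa using (hasDerivAt_id (t : ℂ)).smul_const z
    simpa [Function.comp_def] using
      (h1.comp_hasDerivAt (t : ℂ) h2).scomp t Complex.ofRealCLM.hasDerivAt
  set B : ℝ → ℝ := fun t => C / β * ((1 - (1 - d) * ‖z‖) ^ β - (1 - t * ‖z‖) ^ β) with hB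
  have hBder : ∀ t ∈ Icc (1 - d) 1,
      HasDerivAt B (C * (1 - t * ‖z‖) ^ (β - 1) * ‖z‖) t := by
    intro t ht
    have h1 : HasDerivAt (fun t : ℝ => 1 - t * ‖z‖) (-‖z‖) t := by
      simpa using ((hasDerivAt_id t).mul_const ‖z‖).const_sub 1
    have h2 := ((h1.rpow_const (p := β) (Or.inl (hpos t ht).ne')).const_sub
      ((1 - (1 - d) * ‖z‖) ^ β)).const_mul (C / β)
    refine h2.congr_deriv ?_
    field_simp
  have key := image_norm_le_of_norm_deriv_right_le_deriv_boundary'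
    (f := fun t : ℝ => f ((t : ℂ) • z) - f (((1 - d : ℝ) : ℂ) • z))
    (f' := fun t => fderiv ℂ f ((t : ℂ) • z) z) (a := 1 - d) (b := 1)
    (B := B) (B' := fun t => C * (1 - t * ‖z‖) ^ (β - 1) * ‖z‖)
    (fun t ht => ((hder t ht).sub_const _).continuousAt.continuousWithinAt)
    (fun t ht => ((hder t (Ico_subset_Icc_self ht)).sub_const _).hasDerivWithinAt)
    (by simp [hB])
    (fun t ht => (hBder t ht).continuousAt.continuousWithinAt)
    (fun t ht => (hBder t (Ico_subset_Icc_self ht)).hasDerivWithinAt)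
    (fun t ht => by
      have ht' := Ico_subset_Icc_self ht
      have := hD _ (hmem t ht')
      rw [hnorm t ht'] at this
      exact (ContinuousLinearMap.le_opNorm _ _).trans (by gcongr))
    (show (1 : ℝ) ∈ Icc (1 - d) 1 from ⟨by linarith, le_rfl⟩)
  simp only [Complex.ofReal_one, one_smul] at key
  refine key.trans ?_
  simp only [hB]
  gcongr
  have hsub : (1 - (1 - d) * ‖z‖) ^ β ≤ (1 - 1 * ‖z‖) ^ β + (d * ‖z‖) ^ β := by
    have := Real.rpow_add_le_add_rpow (a := 1 - 1 * ‖z‖) (b := d * ‖z‖)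
      (by linarith) (by positivity) hβ.le hβ1
    convert this using 2
    ring
  have : (d * ‖z‖) ^ β ≤ d ^ β := by
    apply Real.rpow_le_rpow (by positivity) _ hβ.le
    nlinarith
  linarith

/-- The Hardy–Littlewood lemma: with `d = ‖z - w‖`, both points are moved radially by the factor
`1 - d`, and the segment between the images stays at distance at least `d` from the sphere. -/
lemma norm_sub_le_of_norm_fderiv_le {f : E → F} {C β : ℝ} (hC : 0 ≤ C)
    (hβ : 0 < β) (hβ1 : β ≤ 1) (hf : DifferentiableOn ℂ f (ball 0 1))
    (hD : ∀ z ∈ ball (0 : E) 1, ‖fderiv ℂ f z‖ ≤ C * (1 - ‖z‖) ^ (β - 1))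
    {z w : E} (hz : z ∈ ball (0 : E) 1) (hw : w ∈ ball (0 : E) 1)
    (hd0 : 0 < ‖z - w‖) (hd1 : ‖z - w‖ < 1) :
    ‖f z - f w‖ ≤ (2 * (C / β) + C) * ‖z - w‖ ^ β := by
  set d := ‖z - w‖ with hd
  set s : ℂ := ((1 - d : ℝ) : ℂ) with hs
  have hsn : ‖s‖ = 1 - d := by
    rw [hs, Complex.norm_real, Real.norm_of_nonneg (by linarith)]
  have hmem : ∀ x ∈ ball (0 : E) 1, s • x ∈ closedBall (0 : E) (1 - d) := fun x hx => by
    rw [mem_closedBall_zero_iff, norm_smul, hsn]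
    have : ‖x‖ < 1 := by simpa using hx
    nlinarith
  have h1 := norm_sub_smul_le_of_norm_fderiv_le hC hβ hβ1 hf hD hz hd0 hd1
  have h2 := norm_sub_smul_le_of_norm_fderiv_le hC hβ hβ1 hf hD hw hd0 hd1
  have hsub : closedBall (0 : E) (1 - d) ⊆ ball 0 1 := closedBall_subset_ball (by linarith)
  have h3 : ‖f (s • z) - f (s • w)‖ ≤ C * d ^ (β - 1) * ‖s • z - s • w‖ := by
    refine Convex.norm_image_sub_le_of_norm_fderiv_le (𝕜 := ℂ) (s := closedBall (0 : E) (1 - d))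
      (fun x hx => hf.differentiableAt (isOpen_ball.mem_nhds (hsub hx))) (fun x hx => ?_)
      (convex_closedBall _ _) (hmem w hw) (hmem z hz)
    refine (hD x (hsub hx)).trans ?_
    have hx' : ‖x‖ ≤ 1 - d := by simpa using hx
    exact mul_le_mul_of_nonneg_left
      (Real.rpow_le_rpow_of_nonpos hd0 (by linarith) (by linarith)) hC
  have h4 : C * d ^ (β - 1) * ‖s • z - s • w‖ ≤ C * d ^ β := by
    have e : d ^ β = d ^ (β - 1) * d := by
      rw [Real.rpow_sub_one hd0.ne']; field_simp
    rw [← smul_sub, norm_smul, hsn, ← hd, e, mul_assoc]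
    gcongr
    nlinarith
  have h5 : f z - f w = (f z - f (s • z)) + (f (s • z) - f (s • w)) - (f w - f (s • w)) := by
    abel
  calc ‖f z - f w‖ ≤ ‖f z - f (s • z)‖ + ‖f (s • z) - f (s • w)‖ + ‖f w - f (s • w)‖ := by
        rw [h5]
        exact (norm_sub_le _ _).trans (by gcongr; exact norm_add_le _ _)
    _ ≤ (2 * (C / β) + C) * d ^ β := by linarith

end HardyLittlewood

/-- The Schwarz-type inequality on the disc of radius `(1 - ‖z‖) / 2` around `z` in each complex
direction, where `‖f‖ ≤ ‖f z‖ + c ((1 - ‖z‖) / 2) ^ α`. -/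
lemma norm_fderiv_le_of_modulus {E F : Type*} [NormedAddCommGroup E] [NormedSpace ℂ E]
    [NormedAddCommGroup F] [InnerProductSpace ℂ F] [CompleteSpace F]
    {f : E → F} {α c M : ℝ} (hα0 : 0 < α) (hc : 0 ≤ c) (hM : 0 ≤ M)
    (hf : DifferentiableOn ℂ f (ball 0 1))
    (hmod : ∀ z ∈ ball (0 : E) 1, ∀ w ∈ ball (0 : E) 1, |‖f z‖ - ‖f w‖| ≤ c * ‖z - w‖ ^ α)
    (hfM : ∀ z ∈ ball (0 : E) 1, ‖f z‖ ≤ M) {z : E} (hz : z ∈ ball (0 : E) 1) :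
    ‖fderiv ℂ f z‖ ≤
      √(c * (2 * M + c)) * (1 / 2) ^ (α / 2 - 1) * (1 - ‖z‖) ^ (α / 2 - 1) := by
  have hz1 : ‖z‖ < 1 := by simpa using hz
  set r : ℝ := 1 / 2 * (1 - ‖z‖) with hr
  have hr0 : 0 < r := by rw [hr]; linarith
  have hr1 : r ≤ 1 := by rw [hr]; linarith [norm_nonneg z]
  rw [mul_assoc, ← Real.mul_rpow (by norm_num) (by linarith), ← hr]
  set K := √(c * (2 * M + c)) with hK
  have hK2 : K ^ 2 = c * (2 * M + c) := Real.sq_sqrt (by positivity)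
  have hunit : ∀ u : E, ‖u‖ = 1 → ‖fderiv ℂ f z u‖ ≤ K * r ^ (α / 2 - 1) := by
    intro u hu
    set g : ℂ → F := fun ζ => f (z + ζ • u) with hg
    have hmem : ∀ ζ ∈ ball (0 : ℂ) (1 - ‖z‖), z + ζ • u ∈ ball (0 : E) 1 := fun ζ hζ => by
      rw [mem_ball_zero_iff] at hζ ⊢
      calc _ ≤ ‖z‖ + ‖ζ • u‖ := norm_add_le _ _
        _ = ‖z‖ + ‖ζ‖ := by rw [norm_smul, hu, mul_one]
        _ < 1 := by linarith
    have hgd : DifferentiableOn ℂ g (ball 0 (1 - ‖z‖)) :=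
      hf.comp (by fun_prop) hmem
    have hg0 : g 0 = f z := by simp [hg]
    have hder : deriv g 0 = fderiv ℂ f z u := by
      have h1 : HasFDerivAt f (fderiv ℂ f z) (z + (0 : ℂ) • u) := by
        simpa using (hf.differentiableAt (isOpen_ball.mem_nhds hz)).hasFDerivAt
      have h2 : HasDerivAt (fun s : ℂ => z + s • u) u 0 := by
        simpa using ((hasDerivAt_id (0 : ℂ)).smul_const u).const_add z
      exact (h1.comp_hasDerivAt (0 : ℂ) h2).deriv
    have hR : ∀ ζ : ℂ, ‖ζ‖ = r → ‖g ζ‖ ≤ ‖f z‖ + c * r ^ α := by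
      intro ζ hζ
      have h1 : ζ ∈ ball (0 : ℂ) (1 - ‖z‖) := by
        rw [mem_ball_zero_iff, hζ, hr]; linarith
      have h2 := (le_abs_self _).trans (hmod _ (hmem ζ h1) z hz)
      rw [add_sub_cancel_left, norm_smul, hu, mul_one, hζ] at h2
      simp only [hg]; linarith
    have key := sq_norm_deriv_le_of_norm_le hr0 (by rw [hr]; linarith) hgd hR
    rw [hder, hg0] at key
    have hrα0 : 0 ≤ r ^ α := by positivity
    have hrα1 : r ^ α ≤ 1 := Real.rpow_le_one hr0.le hr1 hα0.le
    have e1 : (r ^ (α / 2)) ^ 2 = r ^ α := by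
      rw [← Real.rpow_natCast, ← Real.rpow_mul hr0.le]; congr 1; push_cast; ring
    have e2 : (r * ‖fderiv ℂ f z u‖) ^ 2 ≤ (K * r ^ (α / 2)) ^ 2 := by
      rw [mul_pow r, mul_pow K, hK2, e1]
      refine key.trans ?_
      have h1 : c * r ^ α ≤ c := by nlinarith
      have h2 := hfM z hz
      have h3 : 0 ≤ c * r ^ α := by positivity
      nlinarith [mul_nonneg h3 (sub_nonneg.2 h1), mul_nonneg h3 (sub_nonneg.2 h2)]
    have e3 := (pow_le_pow_iff_left₀ (by positivity) (by positivity) two_ne_zero).1 e2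
    rw [Real.rpow_sub_one hr0.ne', ← mul_div_assoc, le_div_iff₀ hr0]
    linarith
  refine ContinuousLinearMap.opNorm_le_bound _ (by positivity) fun v => ?_
  rcases eq_or_ne v 0 with rfl | hv
  · simp
  · have hv' : ‖v‖ ≠ 0 := norm_ne_zero_iff.2 hv
    have h1 := hunit (((‖v‖⁻¹ : ℝ) : ℂ) • v) (by
      rw [norm_smul, Complex.norm_real, norm_inv, norm_norm, inv_mul_cancel₀ hv'])
    rw [map_smul, norm_smul, Complex.norm_real, norm_inv, norm_norm,
      inv_mul_le_iff₀ (by positivity)] at h1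
    linarith

theorem modulus_lambda_alpha_implies_half_alpha
    (n m : ℕ) (hn : 1 ≤ n) (hm : 2 ≤ m) (α : ℝ) (hα0 : 0 < α) (hα1 : α ≤ 1)
    (f : EuclideanSpace ℂ (Fin n) → EuclideanSpace ℂ (Fin m))
    (hf : DifferentiableOn ℂ f (Metric.ball 0 1))
    (hmod : ∃ c : ℝ, ∀ z ∈ Metric.ball (0 : EuclideanSpace ℂ (Fin n)) 1,
      ∀ w ∈ Metric.ball (0 : EuclideanSpace ℂ (Fin n)) 1,
        |‖f z‖ - ‖f w‖| ≤ c * ‖z - w‖ ^ α) :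
    ∃ C : ℝ, ∀ z ∈ Metric.ball (0 : EuclideanSpace ℂ (Fin n)) 1,
      ∀ w ∈ Metric.ball (0 : EuclideanSpace ℂ (Fin n)) 1,
        ‖f z - f w‖ ≤ C * ‖z - w‖ ^ (α / 2) := by
  obtain ⟨c', hc'⟩ := hmod
  set c := |c'| with hcdef
  have hc : 0 ≤ c := abs_nonneg _
  have hmod : ∀ z ∈ ball (0 : EuclideanSpace ℂ (Fin n)) 1,
      ∀ w ∈ ball (0 : EuclideanSpace ℂ (Fin n)) 1, |‖f z‖ - ‖f w‖| ≤ c * ‖z - w‖ ^ α :=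
    fun z hz w hw => (hc' z hz w hw).trans (by gcongr; exact le_abs_self _)
  set M := ‖f 0‖ + c with hMdef
  have hM : 0 ≤ M := by positivity
  have hfM : ∀ z ∈ ball (0 : EuclideanSpace ℂ (Fin n)) 1, ‖f z‖ ≤ M := by
    intro z hz
    have h1 := (le_abs_self _).trans (hmod z hz 0 (mem_ball_self one_pos))
    rw [sub_zero] at h1
    have h2 : ‖z‖ ^ α ≤ 1 :=
      Real.rpow_le_one (norm_nonneg _) (le_of_lt (by simpa using hz)) hα0.le
    nlinarith
  set C := √(c * (2 * M + c)) * (1 / 2) ^ (α / 2 - 1) with hCdef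
  have hC : 0 ≤ C := by positivity
  have hD := fun z hz => norm_fderiv_le_of_modulus (z := z) hα0 hc hM hf hmod hfM hz
  have hCβ : 0 ≤ 2 * (C / (α / 2)) + C := by positivity
  refine ⟨(2 * (C / (α / 2)) + C) + 2 * M, fun z hz w hw => ?_⟩
  rcases eq_or_ne z w with rfl | hzw
  · rw [sub_self, sub_self, norm_zero, norm_zero]; positivity
  have hd0 : 0 < ‖z - w‖ := norm_pos_iff.2 (sub_ne_zero.2 hzw)
  rcases lt_or_ge ‖z - w‖ 1 with hd1 | hd1
  · refine (norm_sub_le_of_norm_fderiv_le hC (half_pos hα0) (by linarith) hf hD hz hw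
      hd0 hd1).trans (mul_le_mul_of_nonneg_right ?_ (by positivity))
    linarith
  · have h1 : 1 ≤ ‖z - w‖ ^ (α / 2) := Real.one_le_rpow hd1 (by linarith)
    have h2 : ‖f z - f w‖ ≤ 2 * M :=
      (norm_sub_le _ _).trans (by linarith [hfM z hz, hfM w hw])
    nlinarith
end

section
/- Let n ≥ 1, m ≥ 2, and let f : 𝔹ⁿ → ℂᵐ be holomorphic. Fix z ∈ 𝔹ⁿ and suppose M_z = sup{‖f(w)‖ : w ∈ ℂⁿ, ‖w − z‖ < 1 − ‖z‖} is finite and positive. Then (1 − ‖z‖)·‖f'(z)‖ ≤ √(2·M_z)·√(M_z − ‖f(z)‖). -/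
/-!
Restrict `f` to a complex disc of radius `1 - ‖z‖` centred at `z` in the direction of a unit vector:
this gives a holomorphic `g` on the unit disc with `‖g‖ ≤ M`. Its first two Taylor coefficients
satisfy the Parseval-type bound `‖g 0‖² + ‖g' 0‖² ≤ M²`, so that
`‖g' 0‖² ≤ (M + ‖g 0‖) (M - ‖g 0‖) ≤ 2 M (M - ‖g 0‖)`.

The coefficient bound (`norm_sq_add_norm_deriv_sq_le`) is obtained without integration. With
`a₀ = g 0`, `a₁ = g' 0` and `d ζ = (g ζ - a₀) / ζ`, expanding `‖g ζ - (a₀ + ζ a₁)‖² ≥ 0` on the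
circle `|ζ| = r` bounds the real part of the holomorphic function
`H = 2 ⟪a₀, g⟫ + 2 r² ⟪a₁, d⟫` by `M² + ‖a₀‖² + r² ‖a₁‖²`, because the cross terms are conjugate and
cancel. The maximum principle at `0`, where `H 0 = 2 ‖a₀‖² + 2 r² ‖a₁‖²`, gives
`‖a₀‖² + r² ‖a₁‖² ≤ M²`, and then `r → 1`.
-/

open Metric Set

/-- Maximum principle for the real part, from the maximum modulus principle applied to `exp ∘ H`. -/
lemma re_le_of_forall_sphere_re_le {H : ℂ → ℂ} {r B : ℝ} (hr : 0 < r)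
    (hH : DifferentiableOn ℂ H (closedBall 0 r))
    (hB : ∀ ζ : ℂ, ‖ζ‖ = r → (H ζ).re ≤ B) : (H 0).re ≤ B := by
  have hd : DiffContOnCl ℂ (fun ζ => Complex.exp (H ζ)) (ball 0 r) := by
    apply DifferentiableOn.diffContOnCl
    rw [closure_ball _ hr.ne']
    exact hH.cexp
  have h := Complex.norm_le_of_forall_mem_frontier_norm_le isBounded_ball hd (C := Real.exp B)
    (fun ζ hζ => by
      rw [frontier_ball _ hr.ne', mem_sphere_zero_iff_norm] at hζ
      rw [Complex.norm_exp]
      exact Real.exp_le_exp.2 (hB ζ hζ))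
    (subset_closure (mem_ball_self hr))
  rw [Complex.norm_exp] at h
  exact Real.exp_le_exp.1 h

section

variable {F : Type*} [NormedAddCommGroup F] [InnerProductSpace ℂ F]

/-- The expansion of `‖g ζ - (a₀ + ζ a₁)‖² ≥ 0` with `g ζ = a₀ + ζ d`. -/
lemma two_re_inner_add_le (a₀ a₁ d : F) (ζ : ℂ) :
    2 * (inner ℂ a₀ (a₀ + ζ • d)).re + 2 * ‖ζ‖ ^ 2 * (inner ℂ a₁ d).re
      ≤ ‖a₀ + ζ • d‖ ^ 2 + ‖a₀‖ ^ 2 + ‖ζ‖ ^ 2 * ‖a₁‖ ^ 2 := by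
  have h1 : ‖a₀ + ζ • d‖ ^ 2 = ‖a₀‖ ^ 2 + 2 * (inner ℂ a₀ (ζ • d)).re + ‖ζ • d‖ ^ 2 :=
    norm_add_sq (𝕜 := ℂ) _ _
  have h2 : ‖d - a₁‖ ^ 2 = ‖d‖ ^ 2 - 2 * (inner ℂ d a₁).re + ‖a₁‖ ^ 2 :=
    norm_sub_sq (𝕜 := ℂ) _ _
  have h3 : (inner ℂ d a₁).re = (inner ℂ a₁ d).re := inner_re_symm (𝕜 := ℂ) _ _
  have h4 : (inner ℂ a₀ a₀).re = ‖a₀‖ ^ 2 := inner_self_eq_norm_sq (𝕜 := ℂ) a₀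
  rw [inner_add_right, Complex.add_re, h4, h1, norm_smul]
  have h5 : 0 ≤ ‖ζ‖ ^ 2 * ‖d - a₁‖ ^ 2 := by positivity
  rw [h2, h3] at h5
  linarith [mul_pow ‖ζ‖ ‖d‖ 2]

/-- Parseval-type bound for the first two Taylor coefficients of a bounded holomorphic function. -/
lemma norm_sq_add_norm_deriv_sq_le [CompleteSpace F] {g : ℂ → F} {M : ℝ}
    (hg : DifferentiableOn ℂ g (ball 0 1)) (hM : ∀ ζ ∈ ball (0 : ℂ) 1, ‖g ζ‖ ≤ M) :
    ‖g 0‖ ^ 2 + ‖deriv g 0‖ ^ 2 ≤ M ^ 2 := by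
  have key : ∀ r ∈ Ioo (0 : ℝ) 1, ‖g 0‖ ^ 2 + r ^ 2 * ‖deriv g 0‖ ^ 2 ≤ M ^ 2 := by
    rintro r ⟨hr, hr1⟩
    have hsub : closedBall (0 : ℂ) r ⊆ ball 0 1 := closedBall_subset_ball hr1
    have hd : DifferentiableOn ℂ (dslope g 0) (ball 0 1) :=
      (Complex.differentiableOn_dslope (ball_mem_nhds _ one_pos)).2 hg
    have hgd : ∀ ζ, g ζ = g 0 + ζ • dslope g 0 ζ := fun ζ => by
      have := sub_smul_dslope g 0 ζ
      rw [sub_zero] at this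
      rw [this]; abel
    have hH : DifferentiableOn ℂ
        (fun ζ => 2 * innerSL ℂ (g 0) (g ζ)
          + ((2 * r ^ 2 : ℝ) : ℂ) * innerSL ℂ (deriv g 0) (dslope g 0 ζ)) (closedBall 0 r) :=
      ((((innerSL ℂ (g 0)).differentiable.comp_differentiableOn (hg.mono hsub)).const_mul _).add
        (((innerSL ℂ (deriv g 0)).differentiable.comp_differentiableOn
          (hd.mono hsub)).const_mul _))
    have hre : ∀ ζ, (2 * innerSL ℂ (g 0) (g ζ)
          + ((2 * r ^ 2 : ℝ) : ℂ) * innerSL ℂ (deriv g 0) (dslope g 0 ζ)).re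
        = 2 * (inner ℂ (g 0) (g ζ)).re + 2 * r ^ 2 * (inner ℂ (deriv g 0) (dslope g 0 ζ)).re := by
      intro ζ
      rw [Complex.add_re, Complex.re_ofReal_mul, innerSL_apply_apply, innerSL_apply_apply]
      simp
    have h := re_le_of_forall_sphere_re_le (B := M ^ 2 + ‖g 0‖ ^ 2 + r ^ 2 * ‖deriv g 0‖ ^ 2)
      hr hH (fun ζ hζ => by
        have h1 := two_re_inner_add_le (g 0) (deriv g 0) (dslope g 0 ζ) ζ
        rw [← hgd, hζ] at h1
        have h2 : ‖g ζ‖ ^ 2 ≤ M ^ 2 :=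
          pow_le_pow_left₀ (norm_nonneg _) (hM ζ (hsub (by simp [hζ]))) 2
        rw [hre]
        linarith)
    rw [hre, dslope_same] at h
    have h3 : (inner ℂ (g 0) (g 0)).re = ‖g 0‖ ^ 2 := inner_self_eq_norm_sq (𝕜 := ℂ) _
    have h4 : (inner ℂ (deriv g 0) (deriv g 0)).re = ‖deriv g 0‖ ^ 2 :=
      inner_self_eq_norm_sq (𝕜 := ℂ) _
    rw [h3, h4] at h
    linarith
  have hlim : Filter.Tendsto (fun r : ℝ => ‖g 0‖ ^ 2 + r ^ 2 * ‖deriv g 0‖ ^ 2)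
      (nhdsWithin 1 (Iio 1)) (nhds (‖g 0‖ ^ 2 + 1 ^ 2 * ‖deriv g 0‖ ^ 2)) :=
    (Continuous.tendsto (by fun_prop) 1).mono_left nhdsWithin_le_nhds
  rw [one_pow, one_mul] at hlim
  exact le_of_tendsto hlim (Filter.eventually_of_mem (Ioo_mem_nhdsLT one_pos) key)

end

theorem schwarz_pick_sqrt_bound
    (n m : ℕ) (hn : 1 ≤ n) (hm : 2 ≤ m)
    (f : EuclideanSpace ℂ (Fin n) → EuclideanSpace ℂ (Fin m))
    (hf : DifferentiableOn ℂ f (Metric.ball 0 1))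
    (z : EuclideanSpace ℂ (Fin n)) (hz : z ∈ Metric.ball (0 : EuclideanSpace ℂ (Fin n)) 1)
    (hbdd : BddAbove ((fun w => ‖f w‖) '' Metric.ball z (1 - ‖z‖)))
    (hpos : 0 < sSup ((fun w => ‖f w‖) '' Metric.ball z (1 - ‖z‖))) :
    (1 - ‖z‖) * ‖fderiv ℂ f z‖ ≤
      Real.sqrt (2 * sSup ((fun w => ‖f w‖) '' Metric.ball z (1 - ‖z‖))) *
        Real.sqrt (sSup ((fun w => ‖f w‖) '' Metric.ball z (1 - ‖z‖)) - ‖f z‖) := by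
  set M := sSup ((fun w => ‖f w‖) '' Metric.ball z (1 - ‖z‖)) with hMdef
  have hR : 0 < 1 - ‖z‖ := sub_pos.2 (mem_ball_zero_iff.1 hz)
  set R := 1 - ‖z‖ with hRdef
  have hM : ∀ w ∈ ball z R, ‖f w‖ ≤ M := fun w hw => le_csSup hbdd ⟨w, hw, rfl⟩
  have hfz : ‖f z‖ ≤ M := hM z (mem_ball_self hR)
  have hsub : ball z R ⊆ ball 0 1 := ball_subset_ball' (by rw [dist_zero_right, hRdef]; linarith)
  rw [← Real.sqrt_mul (by positivity), ← le_div_iff₀' hR]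
  refine ContinuousLinearMap.opNorm_le_of_unit_norm (𝕜 := ℂ) (by positivity) fun v hv => ?_
  rw [le_div_iff₀' hR]
  apply Real.le_sqrt_of_sq_le
  have hline : ∀ ζ : ℂ, HasDerivAt (fun ζ : ℂ => z + ζ • ((R : ℂ) • v)) ((R : ℂ) • v) ζ := fun ζ => by
    simpa using ((hasDerivAt_id ζ).smul_const ((R : ℂ) • v)).const_add z
  have hmaps : MapsTo (fun ζ : ℂ => z + ζ • ((R : ℂ) • v)) (ball 0 1) (ball z R) := by
    intro ζ hζ
    rw [mem_ball_zero_iff] at hζ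
    rw [mem_ball, dist_self_add_left, norm_smul, norm_smul, hv, Complex.norm_real,
      Real.norm_of_nonneg hR.le, mul_one]
    exact mul_lt_of_lt_one_left hR hζ
  have h := norm_sq_add_norm_deriv_sq_le (g := fun ζ : ℂ => f (z + ζ • ((R : ℂ) • v)))
    (hf.comp (fun ζ _ => (hline ζ).differentiableAt.differentiableWithinAt)
      (hmaps.mono_right hsub)) (fun ζ hζ => hM _ (hmaps hζ))
  have hfd : HasFDerivAt f (fderiv ℂ f z) (z + (0 : ℂ) • ((R : ℂ) • v)) := by
    rw [zero_smul, add_zero]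
    exact (hf.differentiableAt (isOpen_ball.mem_nhds hz)).hasFDerivAt
  have hderiv := (hfd.comp_hasDerivAt (0 : ℂ) (hline 0)).deriv
  change deriv (fun ζ : ℂ => f (z + ζ • ((R : ℂ) • v))) 0 = _ at hderiv
  rw [hderiv, map_smul, norm_smul, Complex.norm_real, Real.norm_of_nonneg hR.le, zero_smul,
    add_zero] at h
  nlinarith [sq_nonneg (M - ‖f z‖)]
end

section
/- Let H be a complex inner product space. For every δ > 0 and x, y ∈ H with ‖x‖ = 1, if ‖x + λy‖ ≤ 1 + δ for every λ ∈ ℂ with |λ| ≤ 1, then ‖y‖ ≤ √(δ(2 + δ)). (Thus Ω_H(δ) ≤ √(δ(2 + δ)) for a complex Hilbert space H.) -/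
open Metric Set

theorem omega_hilbert_bound
    {H : Type*} [NormedAddCommGroup H] [InnerProductSpace ℂ H]
    (δ : ℝ) (hδ : 0 < δ) (x y : H) (hx : ‖x‖ = 1)
    (h : ∀ lam : ℂ, ‖lam‖ ≤ 1 → ‖x + lam • y‖ ≤ 1 + δ) :
    ‖y‖ ≤ Real.sqrt (δ * (2 + δ)) := by
  -- The parallelogram identity at `lam = 1` and `lam = -1` gives `1 + ‖y‖ ^ 2 ≤ (1 + δ) ^ 2`.
  have h1 : ‖x + y‖ ≤ 1 + δ := by simpa using h 1 (by simp)
  have h2 : ‖x - y‖ ≤ 1 + δ := by simpa [sub_eq_add_neg] using h (-1) (by simp)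
  have hp := parallelogram_law_with_norm ℂ x y
  rw [hx] at hp
  apply Real.le_sqrt_of_sq_le
  nlinarith [mul_self_le_mul_self (norm_nonneg _) h1, mul_self_le_mul_self (norm_nonneg _) h2]
end
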